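/- arXiv:gr-qc/0205012 — 6 statements merged into one kernel-verified Lean document; each statement's English description precedes it below -/
import Mathlib

section
/- Let ω be a constant invertible symmetric n×n real matrix with inverse entries ω^{kl}, U ⊆ ℝⁿ open, f: U → ℝⁿ of class C², and α: U → ℝ of class C¹, such that f is conformal with factor e^{2α}: Σ_{r,s} ω_{rs} ∂_i f^r ∂_j f^s = e^{2α} ω_{ij} on U for all i,j. Then the second derivatives of f satisfy, on U and for all i,j,k: ∂_i∂_j f^k = ∂_iα ∂_j f^k + ∂_jα ∂_i f^k − ω_{ij} Σ_{l,m} ω^{lm} ∂_lα ∂_m f^k. -/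
/-!
Differentiating `⟨∂ᵢf, ∂ⱼf⟩ = e^{2α} ωᵢⱼ` gives
`⟨∂ₘ∂ᵢf, ∂ⱼf⟩ + ⟨∂ᵢf, ∂ₘ∂ⱼf⟩ = 2 ∂ₘα ⟨∂ᵢf, ∂ⱼf⟩`. Since second derivatives commute, the cyclic
permutation that yields the Christoffel symbols of a Levi-Civita connection isolates
`⟨∂ᵢ∂ⱼf, ∂ₘf⟩`. The vectors `∂ₘf` span the target, because `e^{2α} ω` is nondegenerate, so these
pairings determine `∂ᵢ∂ⱼf`.
-/

open Matrix

/-- Partial derivative `∂ᵢ f (x)` of a scalar function on `ℝⁿ`. -/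
noncomputable def pd {n : ℕ} (f : (Fin n → ℝ) → ℝ) (i : Fin n) (x : Fin n → ℝ) : ℝ :=
  fderiv ℝ f x (Pi.single i 1)

open Filter Topology

section ConformalFrame

variable {R M ι : Type*} [CommRing R] [Invertible (2 : R)] [AddCommGroup M] [Module R M]
  {B : LinearMap.BilinForm R M}

-- `e i`, `H i j` and `a i` stand for `∂ᵢf`, `∂ᵢ∂ⱼf` and `∂ᵢα`.
theorem bilin_apply_eq_of_symm_of_conformal_frame (hB : B.IsSymm) {e : ι → M} {H : ι → ι → M}
    {a : ι → R} (hH : ∀ i j, H i j = H j i)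
    (hd : ∀ m i j, B (H m i) (e j) + B (e i) (H m j) = 2 * a m * B (e i) (e j)) (i j m : ι) :
    B (H i j) (e m)
      = a i * B (e j) (e m) + a j * B (e i) (e m) - a m * B (e i) (e j) := by
  have hsymm : ∀ v w, B v w = B w v := hB.eq
  have hijm := hd i j m
  have hjmi := hd j m i
  have hmij := hd m i j
  rw [hsymm (e j) (H i m), hH i m] at hijm
  rw [hsymm (e m) (H j i), hH j m, hH j i, hsymm (e m) (e i)] at hjmi
  rw [hsymm (e i) (H m j)] at hmij
  refine (isUnit_of_invertible (2 : R)).mul_left_cancel ?_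
  linear_combination hijm + hjmi - hmij

theorem eq_of_symm_of_conformal_frame (hB : B.IsSymm) {e : ι → M} {H : ι → ι → M} {a : ι → R}
    (hsep : ∀ y, (∀ m, B y (e m) = 0) → y = 0) (hH : ∀ i j, H i j = H j i)
    (hd : ∀ m i j, B (H m i) (e j) + B (e i) (H m j) = 2 * a m * B (e i) (e j))
    {q : M} (hq : ∀ m, B q (e m) = a m) (i j : ι) :
    H i j = a i • e j + a j • e i - B (e i) (e j) • q := by
  refine sub_eq_zero.mp (hsep _ fun m => ?_)
  simp only [map_sub, map_add, map_smul, LinearMap.sub_apply, LinearMap.add_apply,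
    LinearMap.smul_apply, smul_eq_mul, hq, bilin_apply_eq_of_symm_of_conformal_frame hB hH hd]
  ring

end ConformalFrame

section Pullback

variable {R V W : Type*} [CommRing R] [NoZeroDivisors R] [AddCommGroup V] [Module R V]
  [AddCommGroup W] [Module R W] {B : LinearMap.BilinForm R V} {B' : LinearMap.BilinForm R W}
  {L : V →ₗ[R] W} {c : R}

theorem injective_of_comp_eq_smul (hB : B.SeparatingLeft) (hc : c ≠ 0)
    (hL : B'.comp L L = c • B) : Function.Injective L := by
  refine (injective_iff_map_eq_zero L).mpr fun v hv => hB v fun w => ?_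
  have h : B' (L v) (L w) = c * B v w := LinearMap.congr_fun₂ hL v w
  simpa [hv, hc] using h

theorem eq_zero_of_orthogonal_range_of_comp_eq_smul (hB : B.SeparatingLeft) (hc : c ≠ 0)
    (hL : B'.comp L L = c • B) (hsurj : Function.Surjective L) {y : W}
    (hy : ∀ w, B' y (L w) = 0) : y = 0 := by
  obtain ⟨v, rfl⟩ := hsurj y
  have hv : v = 0 := hB v fun w => by
    have h : B' (L v) (L w) = c * B v w := LinearMap.congr_fun₂ hL v w
    simpa [hy, hc] using h
  rw [hv, map_zero]

end Pullback

section Calculus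

variable {E F : Type*} [NormedAddCommGroup E] [NormedSpace ℝ E] [NormedAddCommGroup F]
  [NormedSpace ℝ F] {B : LinearMap.BilinForm ℝ E} {f : E → F} {α : E → ℝ} {x : E}

theorem differentiableAt_fderiv_of_contDiffAt (hf : ContDiffAt ℝ 2 f x) :
    DifferentiableAt ℝ (fderiv ℝ f) x :=
  (hf.fderiv_right (m := 1) (by norm_num)).differentiableAt one_ne_zero

theorem fderiv_component_apply {κ : Type*} {f : E → κ → ℝ} (hf : DifferentiableAt ℝ f x) (k : κ)
    (w : E) : fderiv ℝ (fun y => f y k) x w = fderiv ℝ f x w k := by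
  rw [fderiv_apply hf, ContinuousLinearMap.comp_apply, ContinuousLinearMap.proj_apply]

theorem bilin_fderiv_fderiv_add_of_conformal {B' : F →L[ℝ] F →L[ℝ] ℝ}
    (hf : DifferentiableAt ℝ (fderiv ℝ f) x) (hα : DifferentiableAt ℝ α x)
    (hconf : ∀ᶠ y in 𝓝 x, ∀ u v,
      B' (fderiv ℝ f y u) (fderiv ℝ f y v) = Real.exp (2 * α y) * B u v) (m u v : E) :
    B' (fderiv ℝ (fderiv ℝ f) x m u) (fderiv ℝ f x v)
        + B' (fderiv ℝ f x u) (fderiv ℝ (fderiv ℝ f) x m v)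
      = 2 * fderiv ℝ α x m * B' (fderiv ℝ f x u) (fderiv ℝ f x v) := by
  have hDf (w : E) :
      HasFDerivAt (fun y => fderiv ℝ f y w) ((fderiv ℝ (fderiv ℝ f) x).flip w) x := by
    simpa using hf.hasFDerivAt.clm_apply (hasFDerivAt_const w x)
  have hleft := B'.hasFDerivAt_of_bilinear (hDf u) (hDf v)
  have hright := ((hα.hasFDerivAt.const_mul 2).exp).mul_const (B u v)
  have hderiv := hleft.unique (hright.congr_of_eventuallyEq (hconf.mono fun y hy => hy u v))
  have hm : B' (fderiv ℝ f x u) (fderiv ℝ (fderiv ℝ f) x m v)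
        + B' (fderiv ℝ (fderiv ℝ f) x m u) (fderiv ℝ f x v)
      = B u v * (Real.exp (2 * α x) * (2 * fderiv ℝ α x m)) :=
    DFunLike.congr_fun hderiv m
  rw [hconf.self_of_nhds]
  linear_combination hm

/-- The constant metrics of the source and of the target are `B` and `B'`; `g` is the gradient of
`α` with respect to `B`, whose `m`-th component is `Σ_l ω^{lm} ∂_lα` when `B` has matrix `ω`. -/
theorem stmt_4_general [FiniteDimensional ℝ E] [FiniteDimensional ℝ F]
    (hEF : Module.finrank ℝ E = Module.finrank ℝ F) (hB : B.SeparatingLeft)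
    {B' : LinearMap.BilinForm ℝ F} (hB' : B'.IsSymm)
    (hf : ContDiffAt ℝ 2 f x) (hα : DifferentiableAt ℝ α x)
    (hconf : ∀ᶠ y in 𝓝 x, ∀ u v,
      B' (fderiv ℝ f y u) (fderiv ℝ f y v) = Real.exp (2 * α y) * B u v)
    {g : E} (hg : ∀ w, B g w = fderiv ℝ α x w) (u v : E) :
    fderiv ℝ (fderiv ℝ f) x u v
      = fderiv ℝ α x u • fderiv ℝ f x v + fderiv ℝ α x v • fderiv ℝ f x u
        - B u v • fderiv ℝ f x g := by
  have hx : ∀ u v, B' (fderiv ℝ f x u) (fderiv ℝ f x v) = Real.exp (2 * α x) * B u v :=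
    hconf.self_of_nhds
  have hexp : Real.exp (2 * α x) ≠ 0 := Real.exp_ne_zero _
  have hpullback : B'.comp (fderiv ℝ f x) (fderiv ℝ f x) = Real.exp (2 * α x) • B :=
    LinearMap.ext₂ hx
  have hsurj : Function.Surjective (fderiv ℝ f x : E →ₗ[ℝ] F) :=
    (LinearMap.injective_iff_surjective_of_finrank_eq_finrank hEF).mp
      (injective_of_comp_eq_smul hB hexp hpullback)
  have hgrad (w : E) :
      B' ((Real.exp (2 * α x))⁻¹ • fderiv ℝ f x g) (fderiv ℝ f x w) = fderiv ℝ α x w := by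
    simp [hx, hg, hexp]
  have hmain := eq_of_symm_of_conformal_frame hB'
    (fun _ => eq_zero_of_orthogonal_range_of_comp_eq_smul hB hexp hpullback hsurj)
    (hf.isSymmSndFDerivAt (by simp))
    (bilin_fderiv_fderiv_add_of_conformal (B' := B'.toContinuousBilinearMap)
      (differentiableAt_fderiv_of_contDiffAt hf) hα hconf) hgrad u v
  have hscale : B' (fderiv ℝ f x u) (fderiv ℝ f x v) * (Real.exp (2 * α x))⁻¹ = B u v := by
    rw [hx, mul_right_comm, mul_inv_cancel₀ hexp, one_mul]
  simpa only [ContinuousLinearMap.coe_coe, smul_smul, hscale] using hmain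

end Calculus

section Coordinates

variable {n : ℕ} {ι κ : Type*} [Fintype ι] {f : (Fin n → ℝ) → κ → ℝ} {x : Fin n → ℝ}

theorem pd_apply (hf : DifferentiableAt ℝ f x) (i : Fin n) (k : κ) :
    pd (fun y => f y k) i x = fderiv ℝ f x (Pi.single i 1) k :=
  fderiv_component_apply hf k _

theorem pd_pd_apply [Fintype κ] (hf : ContDiffAt ℝ 2 f x) (i j : Fin n) (k : κ) :
    pd (fun y => pd (fun z => f z k) j y) i x
      = fderiv ℝ (fderiv ℝ f) x (Pi.single i 1) (Pi.single j 1) k := by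
  have hpd : (fun y => pd (fun z => f z k) j y) =ᶠ[𝓝 x] fun y => fderiv ℝ f y (Pi.single j 1) k :=
    (hf.eventually (by simp)).mono fun y hy => pd_apply (hy.differentiableAt two_ne_zero) j k
  have hDf := differentiableAt_fderiv_of_contDiffAt hf
  have hDfj : DifferentiableAt ℝ (fun y => fderiv ℝ f y (Pi.single j 1)) x :=
    hDf.clm_apply (differentiableAt_const _)
  rw [pd, hpd.fderiv_eq, ← pd, pd_apply hDfj, fderiv_clm_apply hDf (differentiableAt_const _)]
  simp

theorem pd_dotProduct (h : (Fin n → ℝ) → ℝ) (x w : Fin n → ℝ) :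
    (fun i => pd h i x) ⬝ᵥ w = fderiv ℝ h x w := by
  conv_rhs => rw [pi_eq_sum_univ' w, map_sum]
  simp [dotProduct, pd, mul_comm]

theorem fderiv_vecMul_apply (hf : DifferentiableAt ℝ f x) (a : ι → ℝ)
    (A : Matrix ι (Fin n) ℝ) (k : κ) :
    fderiv ℝ f x (a ᵥ* A) k = ∑ l, ∑ m, A l m * a l * pd (fun y => f y k) m x := by
  rw [← fderiv_component_apply hf, ← pd_dotProduct, dotProduct_comm, ← dotProduct_mulVec]
  simp only [dotProduct, mulVec, Finset.mul_sum, mul_left_comm, mul_assoc]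

theorem toBilin'_fderiv_of_conformal [Fintype κ] [DecidableEq κ]
    {ω : Matrix (Fin n) (Fin n) ℝ} {ω' : Matrix κ κ ℝ} {c : ℝ} (hf : DifferentiableAt ℝ f x)
    (hconf : ∀ i j, ∑ r, ∑ s, ω' r s * pd (fun y => f y r) i x * pd (fun y => f y s) j x
      = c * ω i j) (u v : Fin n → ℝ) :
    ω'.toBilin' (fderiv ℝ f x u) (fderiv ℝ f x v) = c * ω.toBilin' u v := by
  suffices h : ω'.toBilin'.comp (fderiv ℝ f x) (fderiv ℝ f x) = c • ω.toBilin' from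
    LinearMap.congr_fun₂ h u v
  refine LinearMap.BilinForm.ext_basis (Pi.basisFun ℝ (Fin n)) fun i j => ?_
  have hij : ω'.toBilin' (fderiv ℝ f x (Pi.single i 1)) (fderiv ℝ f x (Pi.single j 1))
      = c * ω i j := by
    simp only [toBilin'_apply, ← pd_apply hf, ← hconf, mul_comm (ω' _ _)]
  simpa using hij

theorem toBilin'_vecMul_inv {R : Type*} [CommRing R] [DecidableEq ι] {ω : Matrix ι ι R}
    (hω : IsUnit ω.det) (a w : ι → R) : ω.toBilin' (a ᵥ* ω⁻¹) w = a ⬝ᵥ w := by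
  rw [toBilin'_apply', dotProduct_mulVec, vecMul_vecMul, nonsing_inv_mul ω hω, vecMul_one]

end Coordinates

/-- prolongation of the conformal equations for a constant background metric:
`∂ᵢ∂ⱼ f^k = ∂ᵢα ∂ⱼ f^k + ∂ⱼα ∂ᵢ f^k − ω_{ij} Σ_{l,m} ω^{lm} ∂_lα ∂_m f^k`. -/
theorem stmt_4 (n : ℕ) (ω : Matrix (Fin n) (Fin n) ℝ)
    (hinv : IsUnit ω.det) (hsym : ω.IsSymm)
    (U : Set (Fin n → ℝ)) (hU : IsOpen U)
    (f : (Fin n → ℝ) → (Fin n → ℝ)) (α : (Fin n → ℝ) → ℝ)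
    (hf : ContDiffOn ℝ 2 f U) (hα : ContDiffOn ℝ 1 α U)
    (hconf : ∀ x ∈ U, ∀ i j : Fin n,
      ∑ r, ∑ s, ω r s * pd (fun y => f y r) i x * pd (fun y => f y s) j x
        = Real.exp (2 * α x) * ω i j) :
    ∀ x ∈ U, ∀ i j k : Fin n,
      pd (fun y => pd (fun z => f z k) j y) i x
        = pd α i x * pd (fun y => f y k) j x + pd α j x * pd (fun y => f y k) i x
          - ω i j * ∑ l, ∑ m, ω⁻¹ l m * pd α l x * pd (fun y => f y k) m x := by
  intro x hx i j k
  have hnhds := hU.mem_nhds hx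
  have hfx := hf.contDiffAt hnhds
  have hαx := (hα.contDiffAt hnhds).differentiableAt one_ne_zero
  have hpullback : ∀ᶠ y in 𝓝 x, ∀ u v, ω.toBilin' (fderiv ℝ f y u) (fderiv ℝ f y v)
      = Real.exp (2 * α y) * ω.toBilin' u v :=
    eventually_of_mem hnhds fun y hy => toBilin'_fderiv_of_conformal
      ((hf.contDiffAt (hU.mem_nhds hy)).differentiableAt two_ne_zero) (hconf y hy)
  have hnondeg : ω.toBilin'.Nondegenerate :=
    LinearMap.BilinForm.nondegenerate_toBilin'_of_det_ne_zero' ω hinv.ne_zero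
  have hmain := stmt_4_general rfl hnondeg.1
    (isSymm_toBilin'_iff_isSymm.mpr hsym) hfx hαx hpullback
    (fun w => (toBilin'_vecMul_inv hinv (fun l => pd α l x) w).trans (pd_dotProduct α x w))
    (Pi.single i 1) (Pi.single j 1)
  have hdx := hfx.differentiableAt two_ne_zero
  rw [pd_pd_apply hfx, hmain, pd_apply hdx, pd_apply hdx, ← fderiv_vecMul_apply hdx,
    ← toBilin'_single ω i j]
  simp only [pd, Pi.sub_apply, Pi.add_apply, Pi.smul_apply, smul_eq_mul]
end

section
/- Let n ≥ 3, let ω be a constant invertible symmetric n×n real matrix with inverse entries ω^{kl}, U ⊆ ℝⁿ open and connected, f: U → ℝⁿ of class C³ and α: U → ℝ of class C² such that f is conformal with factor e^{2α}: Σ_{r,s} ω_{rs} ∂_i f^r ∂_j f^s = e^{2α} ω_{ij} on U for all i,j. Then α satisfies the flat c-system: ∂_i∂_j α = ∂_iα ∂_jα − ½ (Σ_{k,l} ω^{kl} ∂_kα ∂_lα) ω_{ij} on U, for all i,j. -/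
open Matrix

/-!
Write `D²f(u, v) = Df(z)`, as `Df` is invertible. Differentiating the conformality equation and
solving as Koszul does for the Levi-Civita connection gives `z = Γ(u, v)`, the conformal Christoffel
tensor built from `dα`. Differentiating once more, the symmetry of `D³f` and the injectivity of `Df`
turn into the vanishing of the curvature of `e^{2α} ω`. This curvature is the Kulkarni–Nomizu
product of `ω` with `S = ∇dα - dα ⊗ dα + ½ |dα|² ω`. Its trace is `(n - 2) S + tr(S) ω`, and
tracing again gives `2 (n - 1) tr(S) = 0`; so `S = 0` when `n ≥ 3`, which is the flat c-system.
-/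

open Filter Module Topology

section KulkarniNomizu

variable {K V : Type*} [Field K] [AddCommGroup V] [Module K V]

/-- The Kulkarni–Nomizu product of a form `B` with the form `B (S ·) ·`, with its last index raised
by `B`: a vector rather than a scalar, so that no inverse of `B` is involved. -/
def raisedKulkarniNomizu (B : V →ₗ[K] Dual K V) (S : V →ₗ[K] V) (t u v : V) : V :=
  B (S t) v • u - B (S u) v • t - B u v • S t + B t v • S u

variable [FiniteDimensional K V] {B : V →ₗ[K] Dual K V} {S : V →ₗ[K] V}

lemma trace_add_eq_zero_of_raisedKulkarniNomizu_eq_zero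
    (h : ∀ t u v, raisedKulkarniNomizu B S t u v = 0) (t v : V) :
    ((finrank K V : K) - 2) * B (S t) v + LinearMap.trace K V S * B t v = 0 := by
  have hzero : B (S t) v • LinearMap.id - ((B.flip v).comp S).smulRight t
      - (B.flip v).smulRight (S t) + B t v • S = 0 :=
    LinearMap.ext fun u => h t u v
  have htrace := congrArg (LinearMap.trace K V) hzero
  simp only [map_add, map_sub, map_smul, map_zero, LinearMap.trace_id, LinearMap.trace_smulRight,
    LinearMap.comp_apply, LinearMap.flip_apply, smul_eq_mul] at htrace
  linear_combination htrace

lemma eq_zero_of_raisedKulkarniNomizu_eq_zero [CharZero K] (hdim : 3 ≤ finrank K V)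
    (hB : Function.Injective B) (h : ∀ t u v, raisedKulkarniNomizu B S t u v = 0) : S = 0 := by
  set n := finrank K V
  have hn : (n : K) - 2 ≠ 0 := sub_ne_zero.mpr (by exact_mod_cast (by lia : n ≠ 2))
  have hn' : 2 * ((n : K) - 1) ≠ 0 :=
    mul_ne_zero two_ne_zero (sub_ne_zero.mpr (by exact_mod_cast (by lia : n ≠ 1)))
  have hscalar : ((n : K) - 2) • S + LinearMap.trace K V S • LinearMap.id = 0 := by
    ext t
    refine hB (LinearMap.ext fun v => ?_)
    simpa using trace_add_eq_zero_of_raisedKulkarniNomizu_eq_zero h t v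
  have htrace : LinearMap.trace K V S = 0 := by
    have hdouble_trace := congrArg (LinearMap.trace K V) hscalar
    simp only [map_add, map_smul, map_zero, LinearMap.trace_id, smul_eq_mul] at hdouble_trace
    refine (mul_eq_zero.mp ?_).resolve_left hn'
    linear_combination hdouble_trace
  simpa [htrace, hn] using hscalar

end KulkarniNomizu

section Christoffel

variable {E : Type*} [NormedAddCommGroup E] [NormedSpace ℝ E] {B : E ≃L[ℝ] StrongDual ℝ E}

/-- The bilinear form of a constant metric. A metric is encoded as the isomorphism `B` which lowers
indices, so that `B.symm` raises them. -/
def metricForm (B : E ≃L[ℝ] StrongDual ℝ E) : E →ₗ[ℝ] Dual ℝ E :=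
  ContinuousLinearMap.coeLM ℝ ∘ₗ B.toLinearEquiv.toLinearMap

lemma metricForm_apply (u v : E) : metricForm B u v = B u v := rfl

lemma metricForm_injective : Function.Injective (metricForm B) :=
  ContinuousLinearMap.coe_injective.comp B.injective

/-- The difference between the Levi-Civita connections of `e^{2α} B` and of the constant
metric `B`, in the directions `u` and `v`, as a linear function of the covector `dα`. -/
noncomputable def conformalChristoffel (B : E ≃L[ℝ] StrongDual ℝ E) (u v : E) :
    StrongDual ℝ E →L[ℝ] E :=
  (ContinuousLinearMap.apply ℝ ℝ u).smulRight v + (ContinuousLinearMap.apply ℝ ℝ v).smulRight u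
    - B u v • (B.symm : StrongDual ℝ E →L[ℝ] E)

lemma conformalChristoffel_apply (u v : E) (φ : StrongDual ℝ E) :
    conformalChristoffel B u v φ = φ u • v + φ v • u - B u v • B.symm φ := by
  simp [conformalChristoffel]

/-- The difference `H - φ ⊗ φ + ½ |φ|² B` of the two sides of the c-system, with one index raised
by `B`; here `φ` stands for `dα` and `H` for the Hessian of `α`. It is the negative of the Schouten
tensor of the metric `e^{2α} B`. -/
noncomputable def cSystemDefect (B : E ≃L[ℝ] StrongDual ℝ E) (φ : StrongDual ℝ E)
    (H : E →L[ℝ] StrongDual ℝ E) : E →ₗ[ℝ] E :=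
  (B.symm : StrongDual ℝ E →L[ℝ] E).toLinearMap ∘ₗ H
    - φ.toLinearMap.smulRight (B.symm φ) + (φ (B.symm φ) / 2) • LinearMap.id

lemma cSystemDefect_apply (φ : StrongDual ℝ E) (H : E →L[ℝ] StrongDual ℝ E) (t : E) :
    cSystemDefect B φ H t
      = B.symm (H t) - φ t • B.symm φ + (φ (B.symm φ) / 2) • t := by
  simp [cSystemDefect]

lemma cSystemDefect_lower_apply (φ : StrongDual ℝ E) (H : E →L[ℝ] StrongDual ℝ E) (t v : E) :
    B (cSystemDefect B φ H t) v = H t v - φ t * φ v + φ (B.symm φ) / 2 * B t v := by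
  simp [cSystemDefect_apply]

lemma conformalChristoffel_curvature_eq_raisedKulkarniNomizu (hB : ∀ u v, B u v = B v u)
    (φ : StrongDual ℝ E) {H : E →L[ℝ] StrongDual ℝ E} (hH : ∀ u v, H u v = H v u) (t u v : E) :
    (conformalChristoffel B t (conformalChristoffel B u v φ) φ + conformalChristoffel B u v (H t))
        - (conformalChristoffel B u (conformalChristoffel B t v φ) φ
          + conformalChristoffel B t v (H u))
      = raisedKulkarniNomizu (metricForm B) (cSystemDefect B φ H) t u v := by
  have hlower : ∀ w, B w (B.symm φ) = φ w := fun w => by rw [hB, B.apply_symm_apply]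
  simp only [raisedKulkarniNomizu, metricForm_apply, cSystemDefect_lower_apply]
  simp only [conformalChristoffel_apply, cSystemDefect_apply, map_add, map_sub, map_smul,
    smul_eq_mul, hlower, hH u t, hB u t]
  module

end Christoffel

section Conformal

variable {E F : Type*} [NormedAddCommGroup E] [NormedSpace ℝ E]
  [NormedAddCommGroup F] [NormedSpace ℝ F]

/-- Near `x`, the map `f` pulls the constant form `C` on the target back to `e^{2α} B`. -/
def IsConformalNear (B : E ≃L[ℝ] StrongDual ℝ E) (C : F →L[ℝ] StrongDual ℝ F) (f : E → F)
    (α : E → ℝ) (x : E) : Prop :=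
  ∀ᶠ y in 𝓝 x, ∀ u v, C (fderiv ℝ f y u) (fderiv ℝ f y v) = Real.exp (2 * α y) * B u v

variable {B : E ≃L[ℝ] StrongDual ℝ E} {C : F →L[ℝ] StrongDual ℝ F} {f : E → F} {α : E → ℝ} {x : E}

namespace IsConformalNear

lemma eq_zero_of_pullback_eq_zero (hconf : IsConformalNear B C f α x) {u : E}
    (hu : ∀ v, C (fderiv ℝ f x u) (fderiv ℝ f x v) = 0) : u = 0 := by
  refine (map_eq_zero_iff B B.injective).mp (ContinuousLinearMap.ext fun v => ?_)
  exact (mul_eq_zero.mp ((hconf.self_of_nhds u v).symm.trans (hu v))).resolve_left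
    (Real.exp_ne_zero _)

lemma fderiv_injective (hconf : IsConformalNear B C f α x) :
    Function.Injective (fderiv ℝ f x) := by
  refine (injective_iff_map_eq_zero _).mpr fun u hu => ?_
  exact hconf.eq_zero_of_pullback_eq_zero fun v => by
    rw [hu, map_zero, _root_.zero_apply]

lemma fderiv_pullback (hconf : IsConformalNear B C f α x) (hf : ContDiffAt ℝ 2 f x)
    (hα : DifferentiableAt ℝ α x) (t u v : E) :
    C (fderiv ℝ f x u) (fderiv ℝ (fderiv ℝ f) x t v)
        + C (fderiv ℝ (fderiv ℝ f) x t u) (fderiv ℝ f x v)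
      = Real.exp (2 * α x) * (2 * fderiv ℝ α x t * B u v) := by
  have hdf : HasFDerivAt (fderiv ℝ f) (fderiv ℝ (fderiv ℝ f) x) x :=
    ((hf.fderiv_right (m := 1) (by norm_num)).differentiableAt one_ne_zero).hasFDerivAt
  have hdir : ∀ w, HasFDerivAt (fun y => fderiv ℝ f y w)
      ((fderiv ℝ (fderiv ℝ f) x).flip w) x := fun w => by
    simpa using hdf.clm_apply (hasFDerivAt_const w x)
  have hleft := C.hasFDerivAt_of_bilinear (hdir u) (hdir v)
  have hright := (hα.hasFDerivAt.const_mul 2).exp.mul_const (B u v)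
  have heq := (hleft.congr_of_eventuallyEq
    (hconf.mono fun y hy => (hy u v).symm)).unique hright
  have happly := DFunLike.congr_fun heq t
  simp only [ContinuousLinearMap.precompR_apply, ContinuousLinearMap.precompL_apply,
    ContinuousLinearMap.compL_apply, ContinuousLinearMap.comp_apply,
    ContinuousLinearMap.flip_apply, _root_.add_apply, _root_.smul_apply, smul_eq_mul] at happly
  linear_combination happly

/-- The Koszul argument: second derivatives are symmetric, so the alternating sum of the three
cyclic instances of `fderiv_pullback` isolates one term. -/
lemma pullback_fderiv_fderiv (hconf : IsConformalNear B C f α x)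
    (hsurj : Function.Surjective (fderiv ℝ f x)) (hB : ∀ u v, B u v = B v u)
    (hf : ContDiffAt ℝ 2 f x) (hα : DifferentiableAt ℝ α x) (t u v : E) :
    C (fderiv ℝ (fderiv ℝ f) x t u) (fderiv ℝ f x v)
      = Real.exp (2 * α x) * B (conformalChristoffel B t u (fderiv ℝ α x)) v := by
  have hC : ∀ p q, C p q = C q p := by
    intro p q
    obtain ⟨u, rfl⟩ := hsurj p
    obtain ⟨v, rfl⟩ := hsurj q
    rw [hconf.self_of_nhds, hconf.self_of_nhds, hB]
  have hsymm : IsSymmSndFDerivAt ℝ f x := hf.isSymmSndFDerivAt (by simp)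
  have htuv := hconf.fderiv_pullback hf hα t u v
  have huvt := hconf.fderiv_pullback hf hα u v t
  have hvtu := hconf.fderiv_pullback hf hα v t u
  rw [hC (fderiv ℝ f x u), hsymm t v] at htuv
  rw [hC (fderiv ℝ f x v), hsymm u t, hsymm u v] at huvt
  rw [hC (fderiv ℝ f x t)] at hvtu
  simp only [conformalChristoffel_apply, map_add, map_sub, map_smul, B.apply_symm_apply,
    _root_.add_apply, _root_.sub_apply, _root_.smul_apply, smul_eq_mul]
  rw [hB v t] at huvt
  linear_combination (htuv + huvt - hvtu) / 2

lemma fderiv_fderiv_apply (hconf : IsConformalNear B C f α x)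
    (hsurj : Function.Surjective (fderiv ℝ f x)) (hB : ∀ u v, B u v = B v u)
    (hf : ContDiffAt ℝ 2 f x) (hα : DifferentiableAt ℝ α x) (u v : E) :
    fderiv ℝ (fderiv ℝ f) x u v
      = fderiv ℝ f x (conformalChristoffel B u v (fderiv ℝ α x)) := by
  obtain ⟨z, hz⟩ := hsurj (fderiv ℝ (fderiv ℝ f) x u v)
  suffices z - conformalChristoffel B u v (fderiv ℝ α x) = 0 by rw [← hz, sub_eq_zero.mp this]
  refine hconf.eq_zero_of_pullback_eq_zero fun w => ?_
  rw [map_sub, map_sub, _root_.sub_apply, hz, hconf.pullback_fderiv_fderiv hsurj hB hf hα,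
    hconf.self_of_nhds, sub_self]

lemma fderiv_fderiv_fderiv_apply (hconf : IsConformalNear B C f α x)
    (hsurj : ∀ᶠ y in 𝓝 x, Function.Surjective (fderiv ℝ f y)) (hB : ∀ u v, B u v = B v u)
    (hf : ContDiffAt ℝ 3 f x) (hα : ContDiffAt ℝ 2 α x) (t u v : E) :
    fderiv ℝ (fderiv ℝ (fderiv ℝ f)) x t u v
      = fderiv ℝ f x
        (conformalChristoffel B t (conformalChristoffel B u v (fderiv ℝ α x)) (fderiv ℝ α x)
          + conformalChristoffel B u v (fderiv ℝ (fderiv ℝ α) x t)) := by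
  have hf2 : ContDiffAt ℝ 2 f x := hf.of_le (by norm_num)
  have hdf : ContDiffAt ℝ 2 (fderiv ℝ f) x := hf.fderiv_right (by norm_num)
  have hddf : DifferentiableAt ℝ (fderiv ℝ (fderiv ℝ f)) x :=
    (hdf.fderiv_right (m := 1) (by norm_num)).differentiableAt one_ne_zero
  have hdα : DifferentiableAt ℝ (fderiv ℝ α) x :=
    (hα.fderiv_right (m := 1) (by norm_num)).differentiableAt one_ne_zero
  have hsecond : (fun y => fderiv ℝ (fderiv ℝ f) y u v) =ᶠ[𝓝 x]
      fun y => fderiv ℝ f y (conformalChristoffel B u v (fderiv ℝ α y)) := by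
    filter_upwards [hconf.eventually_nhds, hsurj, hf2.eventually (by simp),
      hα.eventually (by simp)] with y hconf_y hsurj_y hf_y hα_y
    exact fderiv_fderiv_apply hconf_y hsurj_y hB hf_y (hα_y.differentiableAt two_ne_zero) u v
  have hleft := (hddf.hasFDerivAt.clm_apply (hasFDerivAt_const u x)).clm_apply
    (hasFDerivAt_const v x)
  have hright := (hdf.differentiableAt two_ne_zero).hasFDerivAt.clm_apply
    ((conformalChristoffel B u v).hasFDerivAt.comp x hdα.hasFDerivAt)
  have hthird := DFunLike.congr_fun
    ((hleft.congr_of_eventuallyEq hsecond.symm).unique hright) t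
  rw [map_add, ← hconf.fderiv_fderiv_apply hsurj.self_of_nhds hB hf2
    (hα.differentiableAt two_ne_zero)]
  simpa [add_comm] using hthird

lemma raisedKulkarniNomizu_cSystemDefect_eq_zero (hconf : IsConformalNear B C f α x)
    (hsurj : ∀ᶠ y in 𝓝 x, Function.Surjective (fderiv ℝ f y)) (hB : ∀ u v, B u v = B v u)
    (hf : ContDiffAt ℝ 3 f x) (hα : ContDiffAt ℝ 2 α x) (t u v : E) :
    raisedKulkarniNomizu (metricForm B)
      (cSystemDefect B (fderiv ℝ α x) (fderiv ℝ (fderiv ℝ α) x)) t u v = 0 := by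
  have hsymm : IsSymmSndFDerivAt ℝ (fderiv ℝ f) x :=
    (hf.fderiv_right (m := 2) (by norm_num)).isSymmSndFDerivAt (by simp)
  have hHess : IsSymmSndFDerivAt ℝ α x := hα.isSymmSndFDerivAt (by simp)
  rw [← conformalChristoffel_curvature_eq_raisedKulkarniNomizu hB _ hHess, sub_eq_zero]
  apply hconf.fderiv_injective
  rw [← hconf.fderiv_fderiv_fderiv_apply hsurj hB hf hα,
    ← hconf.fderiv_fderiv_fderiv_apply hsurj hB hf hα, hsymm t u]

lemma eventually_surjective_fderiv [FiniteDimensional ℝ E] [FiniteDimensional ℝ F]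
    (hconf : IsConformalNear B C f α x) (hEF : finrank ℝ E = finrank ℝ F) :
    ∀ᶠ y in 𝓝 x, Function.Surjective (fderiv ℝ f y) :=
  hconf.eventually_nhds.mono fun _ hy =>
    (LinearMap.injective_iff_surjective_of_finrank_eq_finrank hEF).mp (fderiv_injective hy)

end IsConformalNear

theorem stmt_5_general [FiniteDimensional ℝ E] [FiniteDimensional ℝ F]
    (hdim : 3 ≤ finrank ℝ E) (hEF : finrank ℝ E = finrank ℝ F) (hB : ∀ u v, B u v = B v u)
    (hf : ContDiffAt ℝ 3 f x) (hα : ContDiffAt ℝ 2 α x) (hconf : IsConformalNear B C f α x)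
    (u v : E) :
    fderiv ℝ (fderiv ℝ α) x u v
      = fderiv ℝ α x u * fderiv ℝ α x v
        - 1 / 2 * fderiv ℝ α x (B.symm (fderiv ℝ α x)) * B u v := by
  have hdefect : cSystemDefect B (fderiv ℝ α x) (fderiv ℝ (fderiv ℝ α) x) = 0 :=
    eq_zero_of_raisedKulkarniNomizu_eq_zero hdim metricForm_injective
      (hconf.raisedKulkarniNomizu_cSystemDefect_eq_zero
        (hconf.eventually_surjective_fderiv hEF) hB hf hα)
  have hlower := cSystemDefect_lower_apply (B := B) (fderiv ℝ α x) (fderiv ℝ (fderiv ℝ α) x) u v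
  rw [hdefect, LinearMap.zero_apply, map_zero, _root_.zero_apply] at hlower
  linear_combination -hlower

end Conformal

section MatrixMetric

variable {ι : Type*} [Fintype ι] [DecidableEq ι] {ω : Matrix ι ι ℝ}

/-- The metric with Gram matrix `ω` in the standard basis, as the isomorphism which lowers
indices. -/
noncomputable def matrixMetric (ω : Matrix ι ι ℝ) (hinv : IsUnit ω.det) :
    (ι → ℝ) ≃L[ℝ] StrongDual ℝ (ι → ℝ) :=
  ((ω.toLinearEquiv' (ω.invertibleOfIsUnitDet hinv)).trans
    ((dotProductEquiv ℝ ι).trans LinearMap.toContinuousLinearMap)).toContinuousLinearEquiv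

lemma matrixMetric_apply (hinv : IsUnit ω.det) (u v : ι → ℝ) :
    matrixMetric ω hinv u v = ω *ᵥ u ⬝ᵥ v := rfl

lemma matrixMetric_apply_eq_sum (hinv : IsUnit ω.det) (u v : ι → ℝ) :
    matrixMetric ω hinv u v = ∑ r, ∑ s, ω r s * v r * u s := by
  simp only [matrixMetric_apply, dotProduct, mulVec, Finset.sum_mul, mul_right_comm]

lemma matrixMetric_single (hinv : IsUnit ω.det) (i j : ι) :
    matrixMetric ω hinv (Pi.single i 1) (Pi.single j 1) = ω j i := by
  simp [matrixMetric_apply]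

lemma matrixMetric_comm (hinv : IsUnit ω.det) (hsym : ω.IsSymm) (u v : ι → ℝ) :
    matrixMetric ω hinv u v = matrixMetric ω hinv v u := by
  rw [matrixMetric_apply, matrixMetric_apply, dotProduct_comm, dotProduct_mulVec,
    ← mulVec_transpose, hsym.eq]

lemma dual_apply_eq_dotProduct (φ : StrongDual ℝ (ι → ℝ)) (u : ι → ℝ) :
    φ u = (fun k => φ (Pi.single k 1)) ⬝ᵥ u :=
  (LinearMap.congr_fun ((dotProductEquiv ℝ ι).apply_symm_apply φ) u).symm

lemma matrixMetric_symm_apply (hinv : IsUnit ω.det) (φ : StrongDual ℝ (ι → ℝ)) :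
    (matrixMetric ω hinv).symm φ = ω⁻¹ *ᵥ fun k => φ (Pi.single k 1) := by
  rw [ContinuousLinearEquiv.symm_apply_eq]
  ext u
  rw [matrixMetric_apply, mulVec_mulVec, mul_nonsing_inv _ hinv, one_mulVec,
    dual_apply_eq_dotProduct]

lemma apply_matrixMetric_symm (hinv : IsUnit ω.det) (φ : StrongDual ℝ (ι → ℝ)) :
    φ ((matrixMetric ω hinv).symm φ)
      = ∑ k, ∑ l, ω⁻¹ k l * φ (Pi.single k 1) * φ (Pi.single l 1) := by
  rw [matrixMetric_symm_apply, dual_apply_eq_dotProduct]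
  simp only [mulVec, dotProduct, Finset.mul_sum, mul_left_comm, mul_assoc]

end MatrixMetric

section Coordinates

variable {n : ℕ}

lemma fderiv_single_apply {f : (Fin n → ℝ) → Fin n → ℝ} {x : Fin n → ℝ}
    (hf : DifferentiableAt ℝ f x) (i r : Fin n) :
    fderiv ℝ f x (Pi.single i 1) r = pd (fun y => f y r) i x := by
  rw [pd, fderiv_apply hf, ContinuousLinearMap.comp_apply, ContinuousLinearMap.proj_apply]

lemma pd_pd {α : (Fin n → ℝ) → ℝ} {x : Fin n → ℝ} (hα : ContDiffAt ℝ 2 α x) (i j : Fin n) :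
    pd (fun y => pd α j y) i x = fderiv ℝ (fderiv ℝ α) x (Pi.single i 1) (Pi.single j 1) := by
  have hdα : DifferentiableAt ℝ (fderiv ℝ α) x :=
    (hα.fderiv_right (m := 1) (by norm_num)).differentiableAt one_ne_zero
  simp only [pd]
  rw [fderiv_clm_apply hdα (differentiableAt_const _)]
  simp

lemma isConformalNear_matrixMetric {ω : Matrix (Fin n) (Fin n) ℝ}
    {f : (Fin n → ℝ) → Fin n → ℝ} {α : (Fin n → ℝ) → ℝ} {x : Fin n → ℝ}
    (hinv : IsUnit ω.det) (hf : ContDiffAt ℝ 1 f x)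
    (hconf : ∀ᶠ y in 𝓝 x, ∀ i j : Fin n,
      ∑ r, ∑ s, ω r s * pd (fun z => f z r) i y * pd (fun z => f z s) j y
        = Real.exp (2 * α y) * ω i j) :
    IsConformalNear (matrixMetric ω hinv) (matrixMetric ω hinv : _ →L[ℝ] _) f α x := by
  filter_upwards [hf.eventually (by simp), hconf] with y hf_y hconf_y u v
  have hforms : (metricForm (matrixMetric ω hinv)).compl₁₂ (fderiv ℝ f y : _ →ₗ[ℝ] _)
      (fderiv ℝ f y) = Real.exp (2 * α y) • metricForm (matrixMetric ω hinv) := by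
    refine LinearMap.BilinForm.ext_basis (Pi.basisFun ℝ (Fin n)) fun i j => ?_
    simp only [Pi.basisFun_apply, LinearMap.compl₁₂_apply, LinearMap.smul_apply,
      ContinuousLinearMap.coe_coe, metricForm_apply, matrixMetric_single, smul_eq_mul]
    simp only [matrixMetric_apply_eq_sum, fderiv_single_apply (hf_y.differentiableAt one_ne_zero),
      hconf_y]
  exact LinearMap.congr_fun₂ hforms u v

end Coordinates

/-- for `n ≥ 3`, the conformal exponent `α` of a conformal transformation of a
constant metric satisfies the flat c-system
`∂ᵢ∂ⱼα = ∂ᵢα ∂ⱼα − ½ (Σ_{k,l} ω^{kl} ∂_kα ∂_lα) ω_{ij}`. -/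
theorem stmt_5 (n : ℕ) (hn : 3 ≤ n) (ω : Matrix (Fin n) (Fin n) ℝ)
    (hinv : IsUnit ω.det) (hsym : ω.IsSymm)
    (U : Set (Fin n → ℝ)) (hU : IsOpen U) (hconn : IsConnected U)
    (f : (Fin n → ℝ) → (Fin n → ℝ)) (α : (Fin n → ℝ) → ℝ)
    (hf : ContDiffOn ℝ 3 f U) (hα : ContDiffOn ℝ 2 α U)
    (hconf : ∀ x ∈ U, ∀ i j : Fin n,
      ∑ r, ∑ s, ω r s * pd (fun y => f y r) i x * pd (fun y => f y s) j x
        = Real.exp (2 * α x) * ω i j) :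
    ∀ x ∈ U, ∀ i j : Fin n,
      pd (fun y => pd α j y) i x
        = pd α i x * pd α j x
          - (1 / 2) * (∑ k, ∑ l, ω⁻¹ k l * pd α k x * pd α l x) * ω i j := by
  intro x hx i j
  have hUx : U ∈ 𝓝 x := hU.mem_nhds hx
  have hf_x : ContDiffAt ℝ 3 f x := hf.contDiffAt hUx
  have hα_x : ContDiffAt ℝ 2 α x := hα.contDiffAt hUx
  have hconf_x := isConformalNear_matrixMetric hinv (hf_x.of_le (by norm_num))
    (mem_of_superset hUx hconf)
  rw [pd_pd hα_x, stmt_5_general (by simpa using hn) rfl (matrixMetric_comm hinv hsym) hf_x hα_x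
    hconf_x, apply_matrixMetric_symm, matrixMetric_single, hsym.apply i j]
  rfl
end

section
/- Let ω be a constant invertible symmetric n×n real matrix with inverse entries ω^{kl}, and define F_{ik}: ℝⁿ → ℝ by F_{ik}(c) := c_i c_k − ½ (Σ_{r,s} ω^{rs} c_r c_s) ω_{ik}. On M = ℝⁿ × ℝ × ℝⁿ with coordinates (x, c₀, c), define for each k ∈ {1,…,n} the smooth vector field X_k(x, c₀, c) := (e_k, c_k, (F_{1k}(c), …, F_{nk}(c))), where e_k is the k-th standard basis vector of ℝⁿ. Then all pairwise Lie brackets vanish: for all j, k and every point p ∈ M, (DX_k)_p(X_j(p)) − (DX_j)_p(X_k(p)) = 0. -/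
open Matrix

/-!
The system matrix `ω` turns covectors into a space with the symmetric bilinear form `B = ω⁻¹`, and
the column `w = ω e_k` satisfies `B c w = c_k`. The last component of `X_k` is therefore
`B c w • c - ½ B c c • w`, the infinitesimal special conformal transformation in the direction `w`.
Along such a field `c ↦ B c c` has derivative `B c c * B c w`, so differentiating the field of `w`
along the field of `u` gives an expression symmetric in `u` and `w`: these fields commute. The
middle component of the bracket of two `X_k` vanishes by the symmetry of `B` alone.
-/

section SpecialConformal

variable {𝕜 E : Type*} [NontriviallyNormedField 𝕜] [NormedAddCommGroup E] [NormedSpace 𝕜 E]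

/-- The generator, in direction `w`, of the special conformal transformations of a space with
bilinear form `B`, normalized to be half of the customary `2 B(c, w) c - B(c, c) w`. -/
def specialConformalField (B : E →L[𝕜] E →L[𝕜] 𝕜) (w c : E) : E :=
  B c w • c - (2⁻¹ * B c c) • w

variable {B : E →L[𝕜] E →L[𝕜] 𝕜}

theorem apply_specialConformalField_comm (hB : ∀ x y, B x y = B y x) (u w c : E) :
    B (specialConformalField B u c) w = B (specialConformalField B w c) u := by
  simp only [specialConformalField, map_sub, map_smul, _root_.sub_apply, _root_.smul_apply,
    smul_eq_mul, hB w u, mul_comm (B c u)]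

variable [NeZero (2 : 𝕜)]

theorem apply_self_specialConformalField (u c : E) :
    B c (specialConformalField B u c) = 2⁻¹ * B c c * B c u := by
  have htwo : (2 : 𝕜) ≠ 0 := two_ne_zero
  simp only [specialConformalField, map_sub, map_smul, smul_eq_mul]
  field_simp
  ring

theorem hasFDerivAt_specialConformalField (hB : ∀ x y, B x y = B y x) (w c : E) :
    HasFDerivAt (specialConformalField B w)
      ((B.flip w).smulRight c + B c w • ContinuousLinearMap.id 𝕜 E - (B c).smulRight w) c := by
  have hlin : HasFDerivAt (fun x ↦ B x w) (B.flip w) c := (B.flip w).hasFDerivAt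
  have hquad : HasFDerivAt (fun x ↦ 2⁻¹ * B x x) (B c) c := by
    refine ((B.hasFDerivAt_of_bilinear (hasFDerivAt_id c) (hasFDerivAt_id c)).const_mul
      2⁻¹).congr_fderiv ?_
    ext h
    have htwo : (2 : 𝕜) ≠ 0 := two_ne_zero
    simp [hB h c, ← two_mul, htwo]
  refine ((hlin.smul (hasFDerivAt_id c)).sub (hquad.smul_const w)).congr_fderiv ?_
  ext h
  simp [add_comm]

theorem lieBracket_specialConformalField (hB : ∀ x y, B x y = B y x) (u w c : E) :
    VectorField.lieBracket 𝕜 (specialConformalField B u) (specialConformalField B w) c = 0 := by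
  rw [VectorField.lieBracket, (hasFDerivAt_specialConformalField hB w c).fderiv,
    (hasFDerivAt_specialConformalField hB u c).fderiv, sub_eq_zero]
  simp only [_root_.sub_apply, _root_.add_apply, _root_.smul_apply,
    ContinuousLinearMap.smulRight_apply, ContinuousLinearMap.flip_apply,
    ContinuousLinearMap.id_apply, apply_self_specialConformalField,
    apply_specialConformalField_comm hB u w c]
  simp only [specialConformalField]
  module

end SpecialConformal

section JetField

variable {𝕜 V E : Type*} [NontriviallyNormedField 𝕜] [NormedAddCommGroup E] [NormedSpace 𝕜 E]

/-- The vector field `(x, c₀, c) ↦ (v, φ c, G c)` on the jet space `V × 𝕜 × E`: position `x` moves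
with constant velocity `v`, while the value `c₀` and the first-order part `c` move with velocities
depending on `c` alone. -/
def jetField (v : V) (φ : E →L[𝕜] 𝕜) (G : E → E) (p : V × 𝕜 × E) : V × 𝕜 × E :=
  (v, φ p.2.2, G p.2.2)

variable [NormedAddCommGroup V] [NormedSpace 𝕜 V]

theorem fderiv_jetField_apply (v : V) (φ : E →L[𝕜] 𝕜) {G : E → E} {p : V × 𝕜 × E}
    (hG : DifferentiableAt 𝕜 G p.2.2) (q : V × 𝕜 × E) :
    fderiv 𝕜 (jetField v φ G) p q = (0, φ q.2.2, fderiv 𝕜 G p.2.2 q.2.2) := by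
  have hproj : HasFDerivAt (fun p : V × 𝕜 × E ↦ p.2.2)
      (ContinuousLinearMap.snd 𝕜 𝕜 E ∘L ContinuousLinearMap.snd 𝕜 V (𝕜 × E)) p :=
    hasFDerivAt_snd.comp p hasFDerivAt_snd
  have h := (hasFDerivAt_const v p).prodMk
    ((φ.hasFDerivAt.comp p hproj).prodMk (hG.hasFDerivAt.comp p hproj))
  exact congrArg (· q) h.fderiv

theorem lieBracket_jetField (v w : V) (φ ψ : E →L[𝕜] 𝕜) {G H : E → E} {p : V × 𝕜 × E}
    (hG : DifferentiableAt 𝕜 G p.2.2) (hH : DifferentiableAt 𝕜 H p.2.2) :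
    VectorField.lieBracket 𝕜 (jetField v φ G) (jetField w ψ H) p =
      (0, ψ (G p.2.2) - φ (H p.2.2), VectorField.lieBracket 𝕜 G H p.2.2) := by
  rw [VectorField.lieBracket, fderiv_jetField_apply w ψ hH, fderiv_jetField_apply v φ hG]
  simp only [jetField, Prod.mk_sub_mk, sub_zero, VectorField.lieBracket]

theorem lieBracket_jetField_specialConformalField [NeZero (2 : 𝕜)] {B : E →L[𝕜] E →L[𝕜] 𝕜}
    (hB : ∀ x y, B x y = B y x) (v₁ v₂ : V) (u w : E) (p : V × 𝕜 × E) :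
    VectorField.lieBracket 𝕜 (jetField v₁ (B.flip u) (specialConformalField B u))
      (jetField v₂ (B.flip w) (specialConformalField B w)) p = 0 := by
  have hdiff (w : E) : DifferentiableAt 𝕜 (specialConformalField B w) p.2.2 :=
    (hasFDerivAt_specialConformalField hB w p.2.2).differentiableAt
  rw [lieBracket_jetField _ _ _ _ (hdiff u) (hdiff w), lieBracket_specialConformalField hB,
    ContinuousLinearMap.flip_apply, ContinuousLinearMap.flip_apply,
    apply_specialConformalField_comm hB u w, sub_self]
  rfl

end JetField

section MatrixForm

variable {𝕜 ι : Type*} [NontriviallyNormedField 𝕜] [Fintype ι]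

/-- The bilinear form of a matrix as a continuous bilinear map, written out as a sum over entries so
that `𝕜` need not be complete. -/
def matrixBilinCLM (A : Matrix ι ι 𝕜) : (ι → 𝕜) →L[𝕜] (ι → 𝕜) →L[𝕜] 𝕜 :=
  ∑ r, ∑ s, A r s • (ContinuousLinearMap.proj (R := 𝕜) (φ := fun _ : ι ↦ 𝕜) r).smulRight
    (ContinuousLinearMap.proj (R := 𝕜) (φ := fun _ : ι ↦ 𝕜) s)

theorem matrixBilinCLM_apply (A : Matrix ι ι 𝕜) (x y : ι → 𝕜) :
    matrixBilinCLM A x y = ∑ r, ∑ s, A r s * x r * y s := by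
  simp [matrixBilinCLM, _root_.sum_apply, mul_assoc]

theorem matrixBilinCLM_apply_eq_dotProduct (A : Matrix ι ι 𝕜) (x y : ι → 𝕜) :
    matrixBilinCLM A x y = x ⬝ᵥ A *ᵥ y := by
  simp only [matrixBilinCLM_apply, dotProduct, mulVec, Finset.mul_sum]
  exact Finset.sum_congr rfl fun r _ ↦ Finset.sum_congr rfl fun s _ ↦ by ring

theorem matrixBilinCLM_comm {A : Matrix ι ι 𝕜} (hA : A.IsSymm) (x y : ι → 𝕜) :
    matrixBilinCLM A x y = matrixBilinCLM A y x := by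
  rw [matrixBilinCLM_apply_eq_dotProduct, matrixBilinCLM_apply_eq_dotProduct, dotProduct_mulVec,
    ← mulVec_transpose, hA.eq, dotProduct_comm]

theorem matrixBilinCLM_inv_apply_col [DecidableEq ι] {A : Matrix ι ι 𝕜} (hA : IsUnit A.det)
    (c : ι → 𝕜) (k : ι) : matrixBilinCLM A⁻¹ c (A.col k) = c k := by
  rw [matrixBilinCLM_apply_eq_dotProduct, ← mulVec_single_one, mulVec_mulVec,
    nonsing_inv_mul _ hA, one_mulVec, dotProduct_single_one]

end MatrixForm

theorem stmt_6_general {𝕜 ι : Type*} [NontriviallyNormedField 𝕜] [NeZero (2 : 𝕜)] [Fintype ι]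
    [DecidableEq ι] (ω : Matrix ι ι 𝕜) (hinv : IsUnit ω.det) (hsym : ω.IsSymm)
    (F : ι → ι → (ι → 𝕜) → 𝕜)
    (hF : ∀ i k c, F i k c
      = c i * c k - (1 / 2) * (∑ r, ∑ s, ω⁻¹ r s * c r * c s) * ω i k)
    (X : ι → ((ι → 𝕜) × 𝕜 × (ι → 𝕜)) → ((ι → 𝕜) × 𝕜 × (ι → 𝕜)))
    (hX : ∀ k p, X k p = (Pi.single k 1, p.2.2 k, fun i => F i k p.2.2))
    (j k : ι) (p : (ι → 𝕜) × 𝕜 × (ι → 𝕜)) :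
    VectorField.lieBracket 𝕜 (X j) (X k) p = 0 := by
  let B := matrixBilinCLM ω⁻¹
  have hB : ∀ x y, B x y = B y x := matrixBilinCLM_comm hsym.inv
  have hcol (k : ι) (c : ι → 𝕜) : B c (ω.col k) = c k := matrixBilinCLM_inv_apply_col hinv c k
  have hXB (k : ι) : X k = jetField (Pi.single k 1) (B.flip (ω.col k))
      (specialConformalField B (ω.col k)) := by
    funext p
    rw [hX, jetField, ContinuousLinearMap.flip_apply, hcol]
    congr 2
    funext i
    simp [hF, specialConformalField, hcol, B, matrixBilinCLM_apply, mul_comm (p.2.2 i)]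
  rw [hXB j, hXB k]
  exact lieBracket_jetField_specialConformalField hB _ _ _ _ p

/-- the vector fields `X_k(x, c₀, c) = (e_k, c_k, (F_{1k}(c), …, F_{nk}(c)))`
spanning the distribution annihilated by the Pfaff system of the flat c-system commute
pairwise (Fröbenius involutivity). -/
theorem stmt_6 (n : ℕ) (ω : Matrix (Fin n) (Fin n) ℝ)
    (hinv : IsUnit ω.det) (hsym : ω.IsSymm)
    (F : Fin n → Fin n → (Fin n → ℝ) → ℝ)
    (hF : ∀ i k c, F i k c
      = c i * c k - (1 / 2) * (∑ r, ∑ s, ω⁻¹ r s * c r * c s) * ω i k)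
    (X : Fin n → ((Fin n → ℝ) × ℝ × (Fin n → ℝ)) → ((Fin n → ℝ) × ℝ × (Fin n → ℝ)))
    (hX : ∀ k p, X k p = (Pi.single k 1, p.2.2 k, fun i => F i k p.2.2)) :
    ∀ (j k : Fin n) (p : (Fin n → ℝ) × ℝ × (Fin n → ℝ)),
      fderiv ℝ (X k) p (X j p) - fderiv ℝ (X j) p (X k p) = 0 :=
  stmt_6_general ω hinv hsym F hF X hX
end

section
/- Let ω be a constant invertible symmetric n×n real matrix with inverse entries ω^{kl}. For every x₀ ∈ ℝⁿ, c₀ ∈ ℝ and c₁ ∈ ℝⁿ, there exist r > 0 and a C^∞ function α on the open ball B(x₀, r) such that α satisfies the flat c-system ∂_i∂_j α = ∂_iα ∂_jα − ½ (Σ_{k,l} ω^{kl} ∂_kα ∂_lα) ω_{ij} on B(x₀, r) for all i,j, with prescribed 1-jet α(x₀) = c₀ and ∂_iα(x₀) = (c₁)_i for all i. -/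
open Matrix

/- Put `u = exp (c₀ - α)`. Then `Dα = -Du / u` and `D²α = Dα ⊗ Dα - D²u / u`, so the nonlinear
system for `α` becomes the condition that `D²u` be the multiple `|Du|² / (2u)` of the form `B`,
where `|B w|² = B w w`. The quadratic polynomial with value `1` and differential `-B v` at `x₀` and
constant Hessian `(|B v|² / 2) B` satisfies it identically, and it is positive near `x₀`. -/

section Logarithm

variable {E : Type*} [NormedAddCommGroup E] [NormedSpace ℝ E] {u : E → ℝ} {x : E}

theorem fderiv_const_sub_log (c : ℝ) (hu : DifferentiableAt ℝ u x) (hx : u x ≠ 0) :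
    fderiv ℝ (fun y => c - Real.log (u y)) x = -(u x)⁻¹ • fderiv ℝ u x := by
  rw [fderiv_const_sub, fderiv.log hu hx, neg_smul]

theorem fderiv_fderiv_const_sub_log (c : ℝ) (hu : ContDiffAt ℝ 2 u x) (hx : u x ≠ 0) (a b : E) :
    fderiv ℝ (fderiv ℝ fun y => c - Real.log (u y)) x a b =
      (u x)⁻¹ * fderiv ℝ u x a * ((u x)⁻¹ * fderiv ℝ u x b)
        - (u x)⁻¹ * fderiv ℝ (fderiv ℝ u) x a b := by
  have hdiff : DifferentiableAt ℝ u x := hu.differentiableAt two_ne_zero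
  have hdiff' : DifferentiableAt ℝ (fderiv ℝ u) x :=
    (hu.fderiv_right (m := 1) le_rfl).differentiableAt one_ne_zero
  have hfderiv : (fderiv ℝ fun y => c - Real.log (u y)) =ᶠ[nhds x]
      fun y => -(u y)⁻¹ • fderiv ℝ u y := by
    filter_upwards [hu.eventually (by simp), hu.continuousAt.eventually_ne hx] with y hy hy0
    exact fderiv_const_sub_log c (hy.differentiableAt two_ne_zero) hy0
  have hinv : HasFDerivAt (fun y => -(u y)⁻¹) ((u x ^ 2)⁻¹ • fderiv ℝ u x) x := by
    simpa using ((hasDerivAt_inv hx).comp_hasFDerivAt x hdiff.hasFDerivAt).fun_neg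
  rw [hfderiv.fderiv_eq, (hinv.fun_smul hdiff'.hasFDerivAt).fderiv]
  simp only [_root_.add_apply, _root_.smul_apply, ContinuousLinearMap.smulRight_apply,
    smul_eq_mul]
  ring

end Logarithm

section CSystem

variable {E : Type*} [NormedAddCommGroup E] [NormedSpace ℝ E]

/-- The coordinate-free flat c-system `D²α = Dα ⊗ Dα - ½ |Dα|² B` at the point `x`. The squared
length of the covector `Dα` is encoded as `B w w` for a vector `w` with `Dα = B w`, which makes
sense also for degenerate forms `B` and in infinite dimension. -/
def SolvesCSystemAt (B : E →L[ℝ] E →L[ℝ] ℝ) (α : E → ℝ) (x : E) : Prop :=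
  ∃ w : E, fderiv ℝ α x = B w ∧
    ∀ a b, fderiv ℝ (fderiv ℝ α) x a b = B w a * B w b - 1 / 2 * B w w * B a b

theorem solvesCSystemAt_const_sub_log {B : E →L[ℝ] E →L[ℝ] ℝ} {u : E → ℝ} {x g : E} {q : ℝ}
    (c : ℝ) (hu : ContDiffAt ℝ 2 u x) (hx : u x ≠ 0) (hgrad : fderiv ℝ u x = B g)
    (hhess : fderiv ℝ (fderiv ℝ u) x = (q / 2) • B) (hnorm : B g g = q * u x) :
    SolvesCSystemAt B (fun y => c - Real.log (u y)) x := by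
  refine ⟨-(u x)⁻¹ • g, ?_, fun a b => ?_⟩
  · rw [fderiv_const_sub_log c (hu.differentiableAt two_ne_zero) hx, hgrad, map_smul]
  · rw [fderiv_fderiv_const_sub_log c hu hx, hgrad, hhess]
    simp only [map_smul, _root_.smul_apply, smul_eq_mul, hnorm]
    field_simp

/-- The quadratic polynomial `u` for which `c₀ - log u` is the solution of the c-system with value
`c₀` and differential `B v` at `x₀`. -/
noncomputable def expNegSolution (B : E →L[ℝ] E →L[ℝ] ℝ) (x₀ v x : E) : ℝ :=
  1 - B v (x - x₀) + B v v / 4 * B (x - x₀) (x - x₀)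

/-- The gradient of `expNegSolution` with respect to `B`. -/
noncomputable def expNegGradient (B : E →L[ℝ] E →L[ℝ] ℝ) (x₀ v x : E) : E :=
  (B v v / 2) • (x - x₀) - v

section ExpNegSolution

variable (B : E →L[ℝ] E →L[ℝ] ℝ) (x₀ v x : E)

theorem expNegSolution_self : expNegSolution B x₀ v x₀ = 1 := by
  simp [expNegSolution]

theorem contDiff_expNegSolution {m : WithTop ℕ∞} : ContDiff ℝ m (expNegSolution B x₀ v) := by
  unfold expNegSolution
  fun_prop

variable {B}

theorem hasFDerivAt_apply_self_of_isSymm (hB : B.toBilinForm.IsSymm) :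
    HasFDerivAt (fun y => B y y) ((2 : ℝ) • B x) x := by
  refine (B.hasFDerivAt_of_bilinear (hasFDerivAt_id x) (hasFDerivAt_id x)).congr_fderiv ?_
  ext a
  have hsymm : B a x = B x a := hB.eq a x
  simp [hsymm, two_mul]

theorem fderiv_expNegSolution (hB : B.toBilinForm.IsSymm) :
    fderiv ℝ (expNegSolution B x₀ v) x = B (expNegGradient B x₀ v x) := by
  have hlin : HasFDerivAt (fun y => B v (y - x₀)) (B v) x :=
    (hasFDerivAt_comp_sub x₀).2 (B v).hasFDerivAt
  have hquad : HasFDerivAt (fun y => B (y - x₀) (y - x₀)) ((2 : ℝ) • B (x - x₀)) x :=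
    (hasFDerivAt_comp_sub (f := fun y => B y y) x₀).2
      (hasFDerivAt_apply_self_of_isSymm (x - x₀) hB)
  have h : HasFDerivAt (expNegSolution B x₀ v) (-B v + (B v v / 4) • (2 : ℝ) • B (x - x₀)) x :=
    (hlin.const_sub 1).fun_add (hquad.const_mul (B v v / 4))
  rw [h.fderiv, expNegGradient, map_sub B (_ • _), map_smul]
  module

theorem fderiv_fderiv_expNegSolution (hB : B.toBilinForm.IsSymm) :
    fderiv ℝ (fderiv ℝ (expNegSolution B x₀ v)) x = (B v v / 2) • B := by
  have haffine : fderiv ℝ (expNegSolution B x₀ v) =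
      fun y => (B v v / 2) • B (y - x₀) - B v := by
    ext1 y
    rw [fderiv_expNegSolution x₀ v y hB, expNegGradient, map_sub, map_smul]
  have hB_sub : HasFDerivAt (fun y => B (y - x₀)) B x :=
    (hasFDerivAt_comp_sub x₀).2 B.hasFDerivAt
  rw [haffine]
  exact ((hB_sub.fun_const_smul (B v v / 2)).sub_const (B v)).fderiv

theorem apply_expNegGradient_self (hB : B.toBilinForm.IsSymm) :
    B (expNegGradient B x₀ v x) (expNegGradient B x₀ v x) =
      B v v * expNegSolution B x₀ v x := by
  unfold expNegSolution expNegGradient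
  generalize x - x₀ = y
  have hsymm : B y v = B v y := hB.eq y v
  simp only [map_sub, map_smul, _root_.sub_apply, _root_.smul_apply, smul_eq_mul, hsymm]
  ring

end ExpNegSolution

theorem stmt_7_general (B : E →L[ℝ] E →L[ℝ] ℝ) (hB : B.toBilinForm.IsSymm) (x₀ v : E) (c₀ : ℝ) :
    ∃ r > (0 : ℝ), ∃ α : E → ℝ,
      ContDiffOn ℝ (⊤ : ℕ∞) α (Metric.ball x₀ r) ∧
      (∀ x ∈ Metric.ball x₀ r, SolvesCSystemAt B α x) ∧
      α x₀ = c₀ ∧ fderiv ℝ α x₀ = B v := by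
  have hu {m : WithTop ℕ∞} : ContDiff ℝ m (expNegSolution B x₀ v) :=
    contDiff_expNegSolution B x₀ v
  have hu₀ : expNegSolution B x₀ v x₀ = 1 := expNegSolution_self B x₀ v
  obtain ⟨r, hr, hne⟩ := Metric.eventually_nhds_iff_ball.1 <|
    (hu (m := 0)).continuous.continuousAt.eventually_ne (hu₀.trans_ne one_ne_zero)
  refine ⟨r, hr, fun y => c₀ - Real.log (expNegSolution B x₀ v y),
    contDiffOn_const.sub (hu.contDiffOn.log hne), fun x hx => ?_, by simp [hu₀], ?_⟩
  · exact solvesCSystemAt_const_sub_log c₀ hu.contDiffAt (hne x hx)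
      (fderiv_expNegSolution x₀ v x hB) (fderiv_fderiv_expNegSolution x₀ v x hB)
      (apply_expNegGradient_self x₀ v x hB)
  · rw [fderiv_const_sub_log c₀ (hu.differentiable one_ne_zero x₀) (hu₀.trans_ne one_ne_zero),
      fderiv_expNegSolution x₀ v x₀ hB, hu₀]
    simp [expNegGradient]

end CSystem

section Coordinates

theorem pd_pd_eq_fderiv_fderiv {n : ℕ} {f : (Fin n → ℝ) → ℝ} {x : Fin n → ℝ}
    (hf : DifferentiableAt ℝ (fderiv ℝ f) x) (i j : Fin n) :
    pd (fun y => pd f j y) i x = fderiv ℝ (fderiv ℝ f) x (Pi.single i 1) (Pi.single j 1) := by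
  simp only [pd]
  rw [fderiv_clm_apply hf (differentiableAt_const _)]
  simp

theorem toBilin'_apply_single_one {ι R : Type*} [Fintype ι] [DecidableEq ι] [CommSemiring R]
    (M : Matrix ι ι R) (w : ι → R) (k : ι) :
    toBilin' M w (Pi.single k 1) = (w ᵥ* M) k := by
  rw [toBilin'_apply', dotProduct_mulVec, dotProduct_single_one]

theorem sum_inv_mul_vecMul_mul_vecMul {ι R : Type*} [Fintype ι] [DecidableEq ι] [CommRing R]
    {M : Matrix ι ι R} (hM : IsUnit M.det) (w : ι → R) :
    ∑ k, ∑ l, M⁻¹ k l * (w ᵥ* M) k * (w ᵥ* M) l = toBilin' M w w := by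
  calc ∑ k, ∑ l, M⁻¹ k l * (w ᵥ* M) k * (w ᵥ* M) l
      = (w ᵥ* M) ⬝ᵥ M⁻¹ *ᵥ (w ᵥ* M) := by
        simp only [dotProduct, mulVec, Finset.mul_sum]
        refine Finset.sum_congr rfl fun k _ => Finset.sum_congr rfl fun l _ => ?_
        ring
    _ = w ⬝ᵥ w ᵥ* M := by
        rw [dotProduct_mulVec, vecMul_vecMul, mul_nonsing_inv _ hM, vecMul_one]
    _ = toBilin' M w w := by
        rw [toBilin'_apply', dotProduct_mulVec, dotProduct_comm]

theorem pd_eq_vecMul_of_fderiv_eq {n : ℕ} {M : Matrix (Fin n) (Fin n) ℝ} {f : (Fin n → ℝ) → ℝ}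
    {x w : Fin n → ℝ} (hf : fderiv ℝ f x = (toBilin' M).toContinuousBilinearMap w) (k : Fin n) :
    pd f k x = (w ᵥ* M) k := by
  rw [pd, hf, LinearMap.toContinuousBilinearMap_apply, toBilin'_apply_single_one]

theorem SolvesCSystemAt.pd_pd_eq {n : ℕ} {ω : Matrix (Fin n) (Fin n) ℝ} (hinv : IsUnit ω.det)
    {α : (Fin n → ℝ) → ℝ} {x : Fin n → ℝ} (hα : ContDiffAt ℝ 2 α x)
    (hsol : SolvesCSystemAt (toBilin' ω).toContinuousBilinearMap α x) (i j : Fin n) :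
    pd (fun y => pd α j y) i x
      = pd α i x * pd α j x
        - (1 / 2) * (∑ k, ∑ l, ω⁻¹ k l * pd α k x * pd α l x) * ω i j := by
  obtain ⟨w, hgrad, hhess⟩ := hsol
  have hdiff : DifferentiableAt ℝ (fderiv ℝ α) x :=
    (hα.fderiv_right (m := 1) le_rfl).differentiableAt one_ne_zero
  rw [pd_pd_eq_fderiv_fderiv hdiff, hhess]
  simp only [LinearMap.toContinuousBilinearMap_apply, toBilin'_apply_single_one,
    single_one_vecMul, row_apply, pd_eq_vecMul_of_fderiv_eq hgrad,
    sum_inv_mul_vecMul_mul_vecMul hinv]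

end Coordinates

/-- local solvability of the flat c-system with arbitrarily prescribed 1-jet
`(c₀, c₁)` at any point `x₀`. -/
theorem stmt_7 (n : ℕ) (ω : Matrix (Fin n) (Fin n) ℝ)
    (hinv : IsUnit ω.det) (hsym : ω.IsSymm) :
    ∀ (x₀ : Fin n → ℝ) (c₀ : ℝ) (c₁ : Fin n → ℝ),
      ∃ r > (0 : ℝ), ∃ α : (Fin n → ℝ) → ℝ,
        ContDiffOn ℝ (⊤ : ℕ∞) α (Metric.ball x₀ r) ∧
        (∀ x ∈ Metric.ball x₀ r, ∀ i j : Fin n,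
          pd (fun y => pd α j y) i x
            = pd α i x * pd α j x
              - (1 / 2) * (∑ k, ∑ l, ω⁻¹ k l * pd α k x * pd α l x) * ω i j) ∧
        α x₀ = c₀ ∧ ∀ i : Fin n, pd α i x₀ = c₁ i := by
  intro x₀ c₀ c₁
  obtain ⟨r, hr, α, hα, hsol, hα₀, hDα₀⟩ := stmt_7_general
    (toBilin' ω).toContinuousBilinearMap (isSymm_toBilin'_iff_isSymm.2 hsym) x₀ (c₁ ᵥ* ω⁻¹) c₀
  have hα₂ : ∀ x ∈ Metric.ball x₀ r, ContDiffAt ℝ 2 α x := fun x hx =>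
    (hα.contDiffAt (Metric.isOpen_ball.mem_nhds hx)).of_le ENat.LEInfty.out
  refine ⟨r, hr, α, hα, fun x hx => (hsol x hx).pd_pd_eq hinv (hα₂ x hx), hα₀, fun i => ?_⟩
  rw [pd_eq_vecMul_of_fderiv_eq hDα₀, vecMul_vecMul, nonsing_inv_mul _ hinv, vecMul_one]
end

section
/- Let ω be a constant invertible symmetric n×n real matrix with inverse entries ω^{kl}, let U ⊆ ℝⁿ be open and connected, x₀ ∈ U, and let α, β: U → ℝ be C² solutions of the flat c-system ∂_i∂_j u = ∂_iu ∂_ju − ½ (Σ_{k,l} ω^{kl} ∂_ku ∂_lu) ω_{ij} on U. If α(x₀) = β(x₀) and ∂_iα(x₀) = ∂_iβ(x₀) for all i, then α = β on U. -/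
open Matrix

/-!
Because the system expresses every second derivative of a solution through its 1-jet, the 1-jet
`(u, Du)` solves a total differential system `Df = G(x, f)`. Restricted to a segment such a system
is an ordinary differential equation, so solutions that agree at a point agree near it by
Gronwall's inequality, and on a connected set by continuation.
-/

section Continuation

open scoped Topology

theorem eqOn_of_isPreconnected_of_eventuallyEq {X Y : Type*} [TopologicalSpace X]
    [TopologicalSpace Y] [T2Space Y] {s : Set X} (hs : IsPreconnected s) {f g : X → Y}
    (hf : ContinuousOn f s) (hg : ContinuousOn g s)
    (hlocal : ∀ x ∈ s, f x = g x → f =ᶠ[𝓝[s] x] g) {x₀ : X} (hx₀ : x₀ ∈ s)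
    (h₀ : f x₀ = g x₀) : Set.EqOn f g s := by
  have locally_constant : ∀ x ∈ s, ∀ᶠ y in 𝓝[s] x, (f x = g x ↔ f y = g y) := by
    intro x hx
    by_cases heq : f x = g x
    · filter_upwards [hlocal x hx heq] with y hy using iff_of_true heq hy
    · have hne : ∀ᶠ y in 𝓝[s] x, (f y, g y) ∈ (Set.diagonal Y)ᶜ :=
        ((hf x hx).prodMk (hg x hx)).eventually (isClosed_diagonal.isOpen_compl.mem_nhds heq)
      filter_upwards [hne] with y hy using iff_of_false heq hy
  exact fun x hx ↦ (hs.induction₂ (fun x y ↦ f x = g x ↔ f y = g y) locally_constant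
    (fun _ _ _ _ _ _ ↦ Iff.trans) (fun _ _ _ _ ↦ Iff.symm) hx₀ hx).1 h₀

end Continuation

section TotalDifferentialSystem

open scoped Topology NNReal

variable {E F : Type*} [NormedAddCommGroup E] [NormedSpace ℝ E] [NormedAddCommGroup F]
  [NormedSpace ℝ F] {G : E × F → E →L[ℝ] F} {f g : E → F}

theorem hasDerivWithinAt_comp_lineMap {s : Set E} {x y : E}
    (hseg : Set.MapsTo (AffineMap.lineMap x y : ℝ → E) (Set.Icc 0 1) s)
    (hf : ∀ z ∈ s, HasFDerivWithinAt f (G (z, f z)) s z) {r : ℝ} (hr : r ∈ Set.Icc (0 : ℝ) 1) :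
    HasDerivWithinAt (f ∘ (AffineMap.lineMap x y : ℝ → E))
      (G (AffineMap.lineMap x y r, f (AffineMap.lineMap x y r)) (y - x)) (Set.Icc 0 1) r :=
  (hf _ (hseg hr)).comp_hasDerivWithinAt r AffineMap.hasDerivWithinAt_lineMap hseg

theorem eqOn_of_starConvex_of_hasFDerivWithinAt {s : Set E} {x : E} (hs : StarConvex ℝ x s)
    {t : E → Set F} {K : ℝ≥0} (hG : ∀ y ∈ s, LipschitzOnWith K (fun p ↦ G (y, p)) (t y))
    (hf : ∀ y ∈ s, HasFDerivWithinAt f (G (y, f y)) s y) (hft : ∀ y ∈ s, f y ∈ t y)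
    (hg : ∀ y ∈ s, HasFDerivWithinAt g (G (y, g y)) s y) (hgt : ∀ y ∈ s, g y ∈ t y)
    (h : f x = g x) : Set.EqOn f g s := by
  intro y hy
  set γ : ℝ → E := ⇑(AffineMap.lineMap (k := ℝ) x y)
  have hγ : Set.MapsTo γ (Set.Icc 0 1) s := fun r hr ↦
    hs.segment_subset hy (lineMap_mem_segment ℝ x y hr)
  have hγ' : Set.MapsTo γ (Set.Ico 0 1) s := hγ.mono_left Set.Ico_subset_Icc_self
  have hlip : ∀ r ∈ Set.Ico (0 : ℝ) 1,
      LipschitzOnWith (‖y - x‖₊ * K) (fun p ↦ G (γ r, p) (y - x)) (t (γ r)) := fun r hr ↦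
    (ContinuousLinearMap.lipschitz_apply (y - x)).comp_lipschitzOnWith (hG _ (hγ' hr))
  have hderiv : ∀ {φ : E → F}, (∀ z ∈ s, HasFDerivWithinAt φ (G (z, φ z)) s z) →
      ∀ r ∈ Set.Ico (0 : ℝ) 1,
        HasDerivWithinAt (φ ∘ γ) (G (γ r, φ (γ r)) (y - x)) (Set.Ici r) r := fun hφ r hr ↦
    (hasDerivWithinAt_comp_lineMap hγ hφ (Set.Ico_subset_Icc_self hr)).mono_of_mem_nhdsWithin
      (Icc_mem_nhdsGE_of_mem hr)
  have hcont : ∀ {φ : E → F}, (∀ z ∈ s, HasFDerivWithinAt φ (G (z, φ z)) s z) →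
      ContinuousOn (φ ∘ γ) (Set.Icc 0 1) := fun hφ r hr ↦
    (hasDerivWithinAt_comp_lineMap hγ hφ hr).continuousWithinAt
  have hsegment : Set.EqOn (f ∘ γ) (g ∘ γ) (Set.Icc 0 1) :=
    ODE_solution_unique_of_mem_Icc_right (v := fun r p ↦ G (γ r, p) (y - x)) hlip
      (hcont hf) (hderiv hf) (fun r hr ↦ hft _ (hγ' hr))
      (hcont hg) (hderiv hg) (fun r hr ↦ hgt _ (hγ' hr)) (by simpa [γ] using h)
  simpa [γ] using hsegment (Set.right_mem_Icc.2 zero_le_one)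

theorem eventuallyEq_of_hasFDerivAt (hG : LocallyLipschitz G) {x : E}
    (hf : ∀ᶠ y in 𝓝 x, HasFDerivAt f (G (y, f y)) y)
    (hg : ∀ᶠ y in 𝓝 x, HasFDerivAt g (G (y, g y)) y) (h : f x = g x) : f =ᶠ[𝓝 x] g := by
  obtain ⟨K, T, hT, hK⟩ := hG (x, f x)
  have hfT : ∀ᶠ y in 𝓝 x, (y, f y) ∈ T :=
    (continuousAt_id.prodMk hf.self_of_nhds.continuousAt).eventually_mem hT
  have hgT : ∀ᶠ y in 𝓝 x, (y, g y) ∈ T :=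
    (continuousAt_id.prodMk hg.self_of_nhds.continuousAt).eventually_mem (h ▸ hT)
  obtain ⟨ε, hε, hball⟩ :=
    Metric.eventually_nhds_iff_ball.1 ((hf.and hfT).and (hg.and hgT))
  have hfiber : ∀ y ∈ Metric.ball x ε,
      LipschitzOnWith K (fun p ↦ G (y, p)) {p | (y, p) ∈ T} := fun y _ ↦
    mul_one K ▸ hK.comp (LipschitzWith.prodMk_left y).lipschitzOnWith fun _ hp ↦ hp
  exact (eqOn_of_starConvex_of_hasFDerivWithinAt
    ((convex_ball x ε).starConvex (Metric.mem_ball_self hε)) hfiber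
    (fun y hy ↦ (hball y hy).1.1.hasFDerivWithinAt) (fun y hy ↦ (hball y hy).1.2)
    (fun y hy ↦ (hball y hy).2.1.hasFDerivWithinAt) (fun y hy ↦ (hball y hy).2.2)
    h).eventuallyEq_of_mem (Metric.ball_mem_nhds x hε)

theorem eqOn_of_isPreconnected_of_hasFDerivAt (hG : LocallyLipschitz G) {U : Set E}
    (hU : IsOpen U) (hconn : IsPreconnected U) (hf : ∀ x ∈ U, HasFDerivAt f (G (x, f x)) x)
    (hg : ∀ x ∈ U, HasFDerivAt g (G (x, g x)) x) {x₀ : E} (hx₀ : x₀ ∈ U) (h : f x₀ = g x₀) :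
    Set.EqOn f g U :=
  eqOn_of_isPreconnected_of_eventuallyEq hconn
    (fun x hx ↦ (hf x hx).continuousAt.continuousWithinAt)
    (fun x hx ↦ (hg x hx).continuousAt.continuousWithinAt)
    (fun _ hx hfg ↦ (eventuallyEq_of_hasFDerivAt hG ((hU.eventually_mem hx).mono hf)
      ((hU.eventually_mem hx).mono hg) hfg).filter_mono nhdsWithin_le_nhds) hx₀ h

theorem lipschitzWith_clm_prod {H : Type*} [NormedAddCommGroup H] [NormedSpace ℝ H] :
    LipschitzWith 1 fun q : (E →L[ℝ] F) × (E →L[ℝ] H) ↦ q.1.prod q.2 :=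
  (ContinuousLinearMap.prodₗᵢ (𝕜 := ℝ) ℝ).isometry.lipschitz

theorem hasFDerivAt_prodMk_fderiv {u : E → F} {x : E} (hu : ContDiffAt ℝ 2 u x) :
    HasFDerivAt (fun y ↦ (u y, fderiv ℝ u y))
      ((fderiv ℝ u x).prod (fderiv ℝ (fderiv ℝ u) x)) x :=
  (hu.differentiableAt two_ne_zero).hasFDerivAt.prodMk
    ((hu.fderiv_right_succ (n := 1)).differentiableAt one_ne_zero).hasFDerivAt

theorem eqOn_of_isPreconnected_of_fderiv_fderiv_eq
    {Φ : E × F × (E →L[ℝ] F) → E →L[ℝ] E →L[ℝ] F} (hΦ : LocallyLipschitz Φ) {U : Set E}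
    (hU : IsOpen U) (hconn : IsPreconnected U) {u v : E → F} (hu : ContDiffOn ℝ 2 u U)
    (hv : ContDiffOn ℝ 2 v U) (hequ : ∀ x ∈ U, fderiv ℝ (fderiv ℝ u) x = Φ (x, u x, fderiv ℝ u x))
    (heqv : ∀ x ∈ U, fderiv ℝ (fderiv ℝ v) x = Φ (x, v x, fderiv ℝ v x)) {x₀ : E} (hx₀ : x₀ ∈ U)
    (h₀ : u x₀ = v x₀) (h₁ : fderiv ℝ u x₀ = fderiv ℝ v x₀) : Set.EqOn u v U := by
  let G : E × F × (E →L[ℝ] F) → E →L[ℝ] F × (E →L[ℝ] F) := fun p ↦ p.2.2.prod (Φ p)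
  -- `(_ :)` keeps the unifier from unfolding `ContinuousLinearMap.prod` against `G`.
  have hG : LocallyLipschitz G := (lipschitzWith_clm_prod.locallyLipschitz.comp
    ((LipschitzWith.prod_snd.comp LipschitzWith.prod_snd).locallyLipschitz.prodMk hΦ) :)
  have hjet : ∀ {w : E → F}, ContDiffOn ℝ 2 w U →
      (∀ x ∈ U, fderiv ℝ (fderiv ℝ w) x = Φ (x, w x, fderiv ℝ w x)) → ∀ x ∈ U,
        HasFDerivAt (fun y ↦ (w y, fderiv ℝ w y)) (G (x, w x, fderiv ℝ w x)) x :=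
    fun hw heqw x hx ↦ (hasFDerivAt_prodMk_fderiv (hw.contDiffAt (hU.mem_nhds hx))).congr_fderiv
      (congrArg _ (heqw x hx))
  have hjets_eq := eqOn_of_isPreconnected_of_hasFDerivAt hG hU hconn (hjet hu hequ)
    (hjet hv heqv) hx₀ (Prod.ext h₀ h₁)
  exact fun x hx ↦ congrArg Prod.fst (hjets_eq hx)

end TotalDifferentialSystem

section PartialDerivatives

variable {n : ℕ}

/-- The coefficient matrix `B eᵢ eⱼ` of a bilinear form `B` on `ℝⁿ`, which identifies a Hessian with
its second partial derivatives. Matrices are encoded as plain functions, as `Matrix` carries no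
global norm. -/
noncomputable def bilinCoeffs :
    ((Fin n → ℝ) →L[ℝ] (Fin n → ℝ) →L[ℝ] ℝ) ≃L[ℝ] (Fin n → Fin n → ℝ) :=
  ((ContinuousLinearEquiv.refl ℝ (Fin n → ℝ)).arrowCongr
    (ContinuousLinearEquiv.piRing (𝕜 := ℝ) (Fin n))).trans
    (ContinuousLinearEquiv.piRing (𝕜 := ℝ) (Fin n))

theorem bilinCoeffs_fderiv_fderiv {u : (Fin n → ℝ) → ℝ} {x : Fin n → ℝ}
    (hu : ContDiffAt ℝ 2 u x) :
    bilinCoeffs (fderiv ℝ (fderiv ℝ u) x) = fun i j ↦ pd (pd u j) i x := by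
  have hdu : DifferentiableAt ℝ (fderiv ℝ u) x :=
    (hu.fderiv_right_succ (n := 1)).differentiableAt one_ne_zero
  funext i j
  change fderiv ℝ (fderiv ℝ u) x (Pi.single i 1) (Pi.single j 1) =
    fderiv ℝ (fun y ↦ fderiv ℝ u y (Pi.single j 1)) x (Pi.single i 1)
  simp [fderiv_clm_apply hdu (differentiableAt_const _)]

theorem stmt_8_general {Φ : (Fin n → ℝ) × ℝ × (Fin n → ℝ) → Fin n → Fin n → ℝ}
    (hΦ : LocallyLipschitz Φ) {U : Set (Fin n → ℝ)} (hU : IsOpen U) (hconn : IsPreconnected U)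
    {u v : (Fin n → ℝ) → ℝ} (hu : ContDiffOn ℝ 2 u U) (hv : ContDiffOn ℝ 2 v U)
    (hequ : ∀ x ∈ U, ∀ i j, pd (pd u j) i x = Φ (x, u x, fun k ↦ pd u k x) i j)
    (heqv : ∀ x ∈ U, ∀ i j, pd (pd v j) i x = Φ (x, v x, fun k ↦ pd v k x) i j)
    {x₀ : Fin n → ℝ} (hx₀ : x₀ ∈ U) (h₀ : u x₀ = v x₀) (h₁ : ∀ i, pd u i x₀ = pd v i x₀) :
    Set.EqOn u v U := by
  -- `coords (fderiv ℝ w x)` unfolds to `fun k ↦ pd w k x`.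
  let coords := ContinuousLinearEquiv.piRing (𝕜 := ℝ) (E := ℝ) (Fin n)
  let Ψ : (Fin n → ℝ) × ℝ × ((Fin n → ℝ) →L[ℝ] ℝ) → (Fin n → ℝ) →L[ℝ] (Fin n → ℝ) →L[ℝ] ℝ :=
    fun p ↦ bilinCoeffs.symm (Φ (p.1, p.2.1, coords p.2.2))
  have hjet : ContDiff ℝ 1 fun p : (Fin n → ℝ) × ℝ × ((Fin n → ℝ) →L[ℝ] ℝ) ↦
      (p.1, p.2.1, coords p.2.2) := by
    fun_prop
  have hform : ContDiff ℝ 1 (bilinCoeffs (n := n)).symm := ContinuousLinearEquiv.contDiff _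
  have hΨ : LocallyLipschitz Ψ := hform.locallyLipschitz.comp (hΦ.comp hjet.locallyLipschitz)
  have hessian_eq : ∀ {w : (Fin n → ℝ) → ℝ}, ContDiffOn ℝ 2 w U →
      (∀ x ∈ U, ∀ i j, pd (pd w j) i x = Φ (x, w x, fun k ↦ pd w k x) i j) →
      ∀ x ∈ U, fderiv ℝ (fderiv ℝ w) x = Ψ (x, w x, fderiv ℝ w x) := fun hw heqw x hx ↦
    bilinCoeffs.eq_symm_apply.2 <|
      (bilinCoeffs_fderiv_fderiv (hw.contDiffAt (hU.mem_nhds hx))).trans <|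
        funext₂ (heqw x hx)
  exact eqOn_of_isPreconnected_of_fderiv_fderiv_eq hΨ hU hconn hu hv (hessian_eq hu hequ)
    (hessian_eq hv heqv) hx₀ h₀ (coords.injective (funext h₁))

end PartialDerivatives

/-- two C² solutions of the flat c-system on a connected open set having the
same 1-jet at one point coincide. -/
theorem stmt_8 (n : ℕ) (ω : Matrix (Fin n) (Fin n) ℝ)
    (hinv : IsUnit ω.det) (hsym : ω.IsSymm)
    (U : Set (Fin n → ℝ)) (hU : IsOpen U) (hconn : IsConnected U)
    (x₀ : Fin n → ℝ) (hx₀ : x₀ ∈ U)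
    (α β : (Fin n → ℝ) → ℝ)
    (hα : ContDiffOn ℝ 2 α U) (hβ : ContDiffOn ℝ 2 β U)
    (heqα : ∀ x ∈ U, ∀ i j : Fin n,
      pd (fun y => pd α j y) i x
        = pd α i x * pd α j x
          - (1 / 2) * (∑ k, ∑ l, ω⁻¹ k l * pd α k x * pd α l x) * ω i j)
    (heqβ : ∀ x ∈ U, ∀ i j : Fin n,
      pd (fun y => pd β j y) i x
        = pd β i x * pd β j x
          - (1 / 2) * (∑ k, ∑ l, ω⁻¹ k l * pd β k x * pd β l x) * ω i j)
    (h0 : α x₀ = β x₀) (h1 : ∀ i : Fin n, pd α i x₀ = pd β i x₀) :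
    Set.EqOn α β U := by
  exact stmt_8_general (Φ := fun p i j ↦ p.2.2 i * p.2.2 j
      - (1 / 2) * (∑ k, ∑ l, ω⁻¹ k l * p.2.2 k * p.2.2 l) * ω i j)
    (ContDiff.locallyLipschitz (𝕂 := ℝ) (by fun_prop)) hU hconn.isPreconnected
    hα hβ heqα heqβ hx₀ h0 h1
end

section
/- Let ω be a constant invertible symmetric n×n real matrix with inverse entries ω^{kl}, U ⊆ ℝⁿ open, and α: U → ℝ a C² solution of the flat c-system ∂_i∂_j α = ∂_iα ∂_jα − ½ (Σ_{k,l} ω^{kl} ∂_kα ∂_lα) ω_{ij} on U. Let g := e^{2α} ω, Γ^k_{ij} := ½ Σ_l (g⁻¹)^{kl} (∂_i g_{jl} + ∂_j g_{il} − ∂_l g_{ij}), and Ric_{ij} := Σ_k ∂_kΓ^k_{ij} − Σ_k ∂_iΓ^k_{kj} + Σ_{k,l} (Γ^k_{kl} Γ^l_{ij} − Γ^k_{il} Γ^l_{kj}). Then Ric_{ij} = 0 on U for all i,j. -/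
open Matrix

/-!
Write `a = ∇α`, `H = ∇²α` and `|a|² = a ⬝ᵥ ω⁻¹ *ᵥ a`. The Christoffel symbols of `e^{2α} ω` are
linear in `a`, with connection matrices `Γᵢ = aᵢ I + eᵢ aᵀ - (ω⁻¹ a) ωᵢᵀ`, where `ωᵢ` is the `i`-th
row of `ω`. Hence `∂ₘ Γᵢ` is the same expression in the `m`-th row of `H`, and the quadratic part of
the Ricci tensor reduces to `tr Γᵢ = n aᵢ` and to `tr (Γᵢ Γⱼ)`. This yields the classical formula
`Ric = -(n - 2) (H - a aᵀ) - (tr (ω⁻¹ H) + (n - 2) |a|²) ω`.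
The c-system reads `H - a aᵀ = -½ |a|² ω`; its trace is `tr (ω⁻¹ H) = (1 - n / 2) |a|²`, and the two
terms of the formula cancel.
-/

section ConnectionMatrix

variable {ι R : Type*} [Fintype ι] [DecidableEq ι] [CommRing R] {ω : Matrix ι ι R}

/-- The connection matrices of `e^{2α} ω` as a function of the covector `a = ∇α`: the entry
`conformalConnection ω a i k j` is the Christoffel symbol `Γ^k_{ij}`, so the first argument after
`a` is a lower index and the row index of the matrix is the upper one. -/
noncomputable def conformalConnection (ω : Matrix ι ι R) (a : ι → R) (i : ι) : Matrix ι ι R :=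
  a i • 1 + vecMulVec (Pi.single i 1) a - vecMulVec (ω⁻¹ *ᵥ a) (ω i)

theorem conformalConnection_apply (ω : Matrix ι ι R) (a : ι → R) (i k j : ι) :
    conformalConnection ω a i k j
      = a i * (1 : Matrix ι ι R) k j + a j * (1 : Matrix ι ι R) k i - (ω⁻¹ *ᵥ a) k * ω i j := by
  simp [conformalConnection, vecMulVec_apply, one_apply, Pi.single_apply]

theorem isLinearMap_conformalConnection_apply (ω : Matrix ι ι R) (i k j : ι) :
    IsLinearMap R fun a => conformalConnection ω a i k j where
  map_add a b := by simp only [conformalConnection_apply, mulVec_add, Pi.add_apply]; ring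
  map_smul c a := by
    simp only [conformalConnection_apply, mulVec_smul, Pi.smul_apply, smul_eq_mul]; ring

theorem conformalConnection_apply_comm (hsym : ω.IsSymm) (a : ι → R) (i k j : ι) :
    conformalConnection ω a i k j = conformalConnection ω a j k i := by
  simp only [conformalConnection_apply, hsym.apply i j]; ring

theorem row_dotProduct_inv_mulVec (hinv : IsUnit ω.det) (a : ι → R) (i : ι) :
    ω i ⬝ᵥ ω⁻¹ *ᵥ a = a i := by
  change (ω *ᵥ ω⁻¹ *ᵥ a) i = a i
  rw [mulVec_mulVec, mul_nonsing_inv ω hinv, one_mulVec]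

theorem trace_conformalConnection (hinv : IsUnit ω.det) (a : ι → R) (i : ι) :
    (conformalConnection ω a i).trace = Fintype.card ι * a i := by
  simp only [conformalConnection, trace_sub, trace_add, trace_smul, trace_one, trace_vecMulVec,
    single_one_dotProduct, dotProduct_comm _ (ω i), row_dotProduct_inv_mulVec hinv, smul_eq_mul]
  ring

theorem trace_conformalConnection_mul (hinv : IsUnit ω.det) (hsym : ω.IsSymm) (a : ι → R)
    (i j : ι) :
    (conformalConnection ω a i * conformalConnection ω a j).trace
      = (Fintype.card ι + 2) * (a i * a j) - 2 * (a ⬝ᵥ ω⁻¹ *ᵥ a) * ω i j := by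
  simp only [conformalConnection, add_mul, sub_mul, mul_add, mul_sub, smul_mul_assoc,
    mul_smul_comm, one_mul, mul_one, vecMulVec_mul_vecMulVec, trace_sub, trace_add, trace_smul,
    trace_one, trace_vecMulVec, single_one_dotProduct, dotProduct_single_one,
    dotProduct_comm _ (ω _), row_dotProduct_inv_mulVec hinv, dotProduct_smul, smul_eq_mul,
    hsym.apply i j, dotProduct_comm (ω⁻¹ *ᵥ a) a]
  ring

theorem sum_conformalConnection_contract (hinv : IsUnit ω.det) (hsym : ω.IsSymm) (a : ι → R)
    (j : ι) : ∑ k, conformalConnection ω a k k j = Fintype.card ι * a j := by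
  simp only [conformalConnection_apply_comm hsym a _ _ j]
  exact trace_conformalConnection hinv a j

theorem sum_mul_conformalConnection_apply (ω : Matrix ι ι R) (a v : ι → R) (i j : ι) :
    ∑ l, v l * conformalConnection ω a i l j
      = a i * v j + a j * v i - (v ⬝ᵥ ω⁻¹ *ᵥ a) * ω i j := by
  change (v ᵥ* conformalConnection ω a i) j = _
  simp [conformalConnection, vecMul_sub, vecMul_add, vecMul_smul, vecMul_vecMulVec, mul_comm (v i)]

theorem sum_conformalConnection_row_apply (ω : Matrix ι ι R) {H : Matrix ι ι R} (hH : H.IsSymm)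
    (i j : ι) :
    ∑ k, conformalConnection ω (H k) i k j = 2 * H i j - (ω⁻¹ * H).trace * ω i j := by
  have htrace : ∑ k, (ω⁻¹ *ᵥ H k) k = (ω⁻¹ * H).trace := by
    simp only [trace, diag_apply, mul_apply, mulVec, dotProduct, hH.apply]
  simp only [conformalConnection_apply, Finset.sum_sub_distrib, Finset.sum_add_distrib,
    ← Finset.sum_mul, htrace, one_apply, mul_ite, mul_one, mul_zero, Finset.sum_ite_eq',
    Finset.mem_univ, if_true, hH.apply i j]
  ring

theorem sum_conformalConnection_quadratic (hinv : IsUnit ω.det) (hsym : ω.IsSymm) (a : ι → R)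
    (i j : ι) :
    ∑ k, ∑ l, (conformalConnection ω a k k l * conformalConnection ω a i l j
        - conformalConnection ω a i k l * conformalConnection ω a k l j)
      = (Fintype.card ι - 2) * (a i * a j - (a ⬝ᵥ ω⁻¹ *ᵥ a) * ω i j) := by
  have hfirst : ∑ k, ∑ l, conformalConnection ω a k k l * conformalConnection ω a i l j
      = Fintype.card ι * (2 * (a i * a j) - (a ⬝ᵥ ω⁻¹ *ᵥ a) * ω i j) := by
    rw [Finset.sum_comm]
    simp only [← Finset.sum_mul, sum_conformalConnection_contract hinv hsym, mul_assoc,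
      ← Finset.mul_sum, sum_mul_conformalConnection_apply]
    ring
  have hsecond : ∑ k, ∑ l, conformalConnection ω a i k l * conformalConnection ω a k l j
      = (conformalConnection ω a i * conformalConnection ω a j).trace := by
    simp only [trace, diag_apply, mul_apply, conformalConnection_apply_comm hsym a j]
  simp only [Finset.sum_sub_distrib, hfirst, hsecond, trace_conformalConnection_mul hinv hsym]
  ring

end ConnectionMatrix

section PartialDerivatives

variable {n : ℕ} {α : (Fin n → ℝ) → ℝ} {x : Fin n → ℝ}

/-- The covector `∇α (x)` of partial derivatives. -/
noncomputable def pdGradient (α : (Fin n → ℝ) → ℝ) (x : Fin n → ℝ) : Fin n → ℝ :=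
  fun i => pd α i x

/-- The matrix `∂ᵢ∂ⱼ α (x)` of second partial derivatives. Its `i`-th row is the `i`-th partial
derivative of the gradient. -/
noncomputable def pdHessian (α : (Fin n → ℝ) → ℝ) (x : Fin n → ℝ) : Matrix (Fin n) (Fin n) ℝ :=
  fun i j => pd (fun y => pd α j y) i x

theorem pd_comp_of_isLinearMap {ι : Type*} [Finite ι] {L : (ι → ℝ) → ℝ} (hL : IsLinearMap ℝ L)
    {f : (Fin n → ℝ) → ι → ℝ} (hf : DifferentiableAt ℝ f x) (i : Fin n) :
    pd (fun y => L (f y)) i x = L fun j => pd (fun y => f y j) i x := by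
  have := Fintype.ofFinite ι
  have hcomp : HasFDerivAt (fun y => L (f y))
      ((hL.mk' L).toContinuousLinearMap.comp (fderiv ℝ f x)) x :=
    (hL.mk' L).toContinuousLinearMap.hasFDerivAt.comp x hf.hasFDerivAt
  have hcoord : ∀ j, pd (fun y => f y j) i x = fderiv ℝ f x (Pi.single i 1) j := fun j => by
    rw [pd, fderiv_apply hf]; rfl
  simp only [hcoord]
  rw [pd, hcomp.fderiv]
  rfl

theorem pd_exp_two_mul_mul_const (hα : DifferentiableAt ℝ α x) (c : ℝ) (i : Fin n) :
    pd (fun y => Real.exp (2 * α y) * c) i x = 2 * pd α i x * Real.exp (2 * α x) * c := by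
  rw [pd, (((hα.hasFDerivAt.const_mul 2).exp).mul_const c).fderiv]
  simp only [_root_.smul_apply, smul_eq_mul, pd]
  ring

theorem differentiableAt_fderiv_of_contDiffAt_two (hα : ContDiffAt ℝ 2 α x) :
    DifferentiableAt ℝ (fderiv ℝ α) x :=
  (hα.fderiv_right (m := 1) (by norm_num)).differentiableAt one_ne_zero

theorem differentiableAt_pdGradient (hα : ContDiffAt ℝ 2 α x) :
    DifferentiableAt ℝ (pdGradient α) x :=
  differentiableAt_pi.2 fun _ =>
    (differentiableAt_fderiv_of_contDiffAt_two hα).clm_apply (differentiableAt_const _)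

theorem pdHessian_isSymm (hα : ContDiffAt ℝ 2 α x) : (pdHessian α x).IsSymm := by
  have happly : ∀ i j, pdHessian α x i j
      = fderiv ℝ (fderiv ℝ α) x (Pi.single i 1) (Pi.single j 1) := fun i j => by
    simp only [pdHessian, pd]
    rw [fderiv_clm_apply (differentiableAt_fderiv_of_contDiffAt_two hα)
      (differentiableAt_const _)]
    simp
  refine Matrix.IsSymm.ext fun i j => ?_
  rw [happly, happly]
  exact (hα.isSymmSndFDerivAt (by simp)).eq _ _

end PartialDerivatives

section Ricci

variable {n : ℕ} {ω : Matrix (Fin n) (Fin n) ℝ} {α : (Fin n → ℝ) → ℝ} {x : Fin n → ℝ}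

/-- The Christoffel symbol `Γ^k_{ij}` of the metric `g`. -/
noncomputable def christoffel (g : (Fin n → ℝ) → Matrix (Fin n) (Fin n) ℝ) (k i j : Fin n)
    (x : Fin n → ℝ) : ℝ :=
  (1 / 2) * ∑ l, (g x)⁻¹ k l *
    (pd (fun y => g y j l) i x + pd (fun y => g y i l) j x - pd (fun y => g y i j) l x)

/-- The Ricci tensor of the torsion-free connection with coefficients `Γ k i j = Γ^k_{ij}`. -/
noncomputable def ricci (Γ : Fin n → Fin n → Fin n → (Fin n → ℝ) → ℝ) (i j : Fin n)
    (x : Fin n → ℝ) : ℝ :=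
  ∑ k, pd (Γ k i j) k x - ∑ k, pd (Γ k k j) i x
    + ∑ k, ∑ l, (Γ k k l x * Γ l i j x - Γ k i l x * Γ l k j x)

theorem christoffel_exp_smul (hinv : IsUnit ω.det) (hsym : ω.IsSymm)
    (hα : DifferentiableAt ℝ α x) (k i j : Fin n) :
    christoffel (fun y => Real.exp (2 * α y) • ω) k i j x
      = conformalConnection ω (pdGradient α x) i k j := by
  have hexp : Real.exp (2 * α x) ≠ 0 := (Real.exp_pos _).ne'
  have hsmul_inv : (Real.exp (2 * α x) • ω)⁻¹ = (Real.exp (2 * α x))⁻¹ • ω⁻¹ :=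
    inv_smul' ω (Units.mk0 _ hexp) hinv
  have hone : ∀ m, (1 : Matrix (Fin n) (Fin n) ℝ) k m = ∑ l, ω⁻¹ k l * ω m l := fun m => by
    simp only [← nonsing_inv_mul ω hinv, mul_apply, hsym.apply]
  simp only [christoffel, hsmul_inv, Matrix.smul_apply, smul_eq_mul,
    pd_exp_two_mul_mul_const hα, conformalConnection_apply, hone, mulVec, dotProduct, pdGradient,
    Finset.mul_sum, Finset.sum_mul, ← Finset.sum_add_distrib, ← Finset.sum_sub_distrib]
  refine Finset.sum_congr rfl fun l _ => ?_
  field_simp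

theorem pd_christoffel_exp_smul (hinv : IsUnit ω.det) (hsym : ω.IsSymm)
    (hα : ContDiffAt ℝ 2 α x) (k i j m : Fin n) :
    pd (christoffel (fun y => Real.exp (2 * α y) • ω) k i j) m x
      = conformalConnection ω (pdHessian α x m) i k j := by
  have hnear : christoffel (fun y => Real.exp (2 * α y) • ω) k i j
      =ᶠ[nhds x] fun y => conformalConnection ω (pdGradient α y) i k j := by
    filter_upwards [hα.eventually (by simp)] with y hy
    exact christoffel_exp_smul hinv hsym (hy.differentiableAt two_ne_zero) k i j
  rw [pd, hnear.fderiv_eq]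
  exact pd_comp_of_isLinearMap (isLinearMap_conformalConnection_apply ω i k j)
    (differentiableAt_pdGradient hα) m

theorem ricci_christoffel_exp_smul (hinv : IsUnit ω.det) (hsym : ω.IsSymm)
    (hα : ContDiffAt ℝ 2 α x) (i j : Fin n) :
    ricci (christoffel fun y => Real.exp (2 * α y) • ω) i j x
      = -(n - 2) * (pdHessian α x i j - pdGradient α x i * pdGradient α x j)
        - ((ω⁻¹ * pdHessian α x).trace
          + (n - 2) * (pdGradient α x ⬝ᵥ ω⁻¹ *ᵥ pdGradient α x)) * ω i j := by
  simp only [ricci, pd_christoffel_exp_smul hinv hsym hα,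
    christoffel_exp_smul hinv hsym (hα.differentiableAt two_ne_zero),
    sum_conformalConnection_row_apply ω (pdHessian_isSymm hα),
    sum_conformalConnection_contract hinv hsym, sum_conformalConnection_quadratic hinv hsym,
    Fintype.card_fin]
  ring

theorem ricci_christoffel_exp_smul_eq_zero (hinv : IsUnit ω.det) (hsym : ω.IsSymm)
    (hα : ContDiffAt ℝ 2 α x)
    (hsystem : pdHessian α x = vecMulVec (pdGradient α x) (pdGradient α x)
      - ((1 / 2) * (pdGradient α x ⬝ᵥ ω⁻¹ *ᵥ pdGradient α x)) • ω) (i j : Fin n) :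
    ricci (christoffel fun y => Real.exp (2 * α y) • ω) i j x = 0 := by
  have hlaplacian : (ω⁻¹ * pdHessian α x).trace
      = (1 - n / 2) * (pdGradient α x ⬝ᵥ ω⁻¹ *ᵥ pdGradient α x) := by
    rw [hsystem, mul_sub, mul_smul_comm, nonsing_inv_mul ω hinv, mul_vecMulVec, trace_sub,
      trace_smul, trace_vecMulVec, trace_one, Fintype.card_fin, dotProduct_comm, smul_eq_mul]
    ring
  rw [ricci_christoffel_exp_smul hinv hsym hα, hlaplacian, hsystem]
  simp only [Matrix.sub_apply, Matrix.smul_apply, vecMulVec_apply, smul_eq_mul]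
  ring

end Ricci

/-- if `α` solves the flat c-system, then the conformally rescaled metric
`g = e^{2α} ω` is Ricci-flat: `Ric_{ij} = 0` on `U`. -/
theorem stmt_17 (n : ℕ) (ω : Matrix (Fin n) (Fin n) ℝ)
    (hinv : IsUnit ω.det) (hsym : ω.IsSymm)
    (U : Set (Fin n → ℝ)) (hU : IsOpen U)
    (α : (Fin n → ℝ) → ℝ) (hα : ContDiffOn ℝ 2 α U)
    (heqα : ∀ x ∈ U, ∀ i j : Fin n,
      pd (fun y => pd α j y) i x
        = pd α i x * pd α j x
          - (1 / 2) * (∑ k, ∑ l, ω⁻¹ k l * pd α k x * pd α l x) * ω i j)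
    (g : (Fin n → ℝ) → Matrix (Fin n) (Fin n) ℝ)
    (hg : ∀ x, g x = Real.exp (2 * α x) • ω)
    (Γ : Fin n → Fin n → Fin n → (Fin n → ℝ) → ℝ)
    (hΓ : ∀ k i j x, Γ k i j x = (1 / 2) * ∑ l, (g x)⁻¹ k l *
      (pd (fun y => g y j l) i x + pd (fun y => g y i l) j x - pd (fun y => g y i j) l x))
    (Ric : Fin n → Fin n → (Fin n → ℝ) → ℝ)
    (hRic : ∀ i j x, Ric i j x
      = ∑ k, pd (Γ k i j) k x - ∑ k, pd (Γ k k j) i x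
        + ∑ k, ∑ l, (Γ k k l x * Γ l i j x - Γ k i l x * Γ l k j x)) :
    ∀ x ∈ U, ∀ i j : Fin n, Ric i j x = 0 := by
  intro x hx i j
  obtain rfl : g = fun y => Real.exp (2 * α y) • ω := funext hg
  obtain rfl : Γ = christoffel fun y => Real.exp (2 * α y) • ω := by
    ext k i j x; exact hΓ k i j x
  have hnorm : pdGradient α x ⬝ᵥ ω⁻¹ *ᵥ pdGradient α x
      = ∑ k, ∑ l, ω⁻¹ k l * pd α k x * pd α l x := by
    simp only [dotProduct, mulVec, pdGradient, Finset.mul_sum, mul_left_comm, mul_assoc]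
  have hsystem : pdHessian α x = vecMulVec (pdGradient α x) (pdGradient α x)
      - ((1 / 2) * (pdGradient α x ⬝ᵥ ω⁻¹ *ᵥ pdGradient α x)) • ω := by
    ext i j
    rw [hnorm]
    exact heqα x hx i j
  rw [hRic]
  exact ricci_christoffel_exp_smul_eq_zero hinv hsym (hα.contDiffAt (hU.mem_nhds hx)) hsystem i j
end
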